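/- arXiv:2502.19196 — 3 statements merged into one kernel-verified Lean document; each statement's English description precedes it below -/
import Mathlib

section
/- Let ℓ ≥ 6 be an integer and let M be a matroid on a finite ground set such that every circuit of M and every circuit of the dual matroid M* has cardinality at least ℓ and at most (ℓ−2)⁴. Then T_M(2,0) · T_M(0,2) ≥ T_M(1,1)². -/
open scoped Classical

/-- The rank of a set in a matroid: the maximal cardinality of an independent subset. -/
noncomputable def mrank {α : Type*} (M : Matroid α) (S : Set α) : ℕ :=
  sSup {n : ℕ | ∃ I ⊆ S, M.Indep I ∧ I.ncard = n}

/-- The Tutte polynomial of a matroid whose ground set is the whole (finite) type `α`: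
`T_M(x,y) = Σ_{S ⊆ E} (x−1)^{r(E)−r(S)} (y−1)^{|S|−r(S)}`. -/
noncomputable def matroidTutte {α : Type*} [Fintype α] (M : Matroid α) (x y : ℝ) : ℝ :=
  ∑ S : Finset α,
    (x - 1) ^ (mrank M Set.univ - mrank M (S : Set α)) *
    (y - 1) ^ (S.card - mrank M (S : Set α))

/-- A circuit of a matroid: a minimal dependent set. -/
def IsMatroidCircuit {α : Type*} (M : Matroid α) (C : Set α) : Prop :=
  M.Dep C ∧ ∀ D ⊂ C, M.Indep D

section MatroidPart

set_option linter.unusedSectionVars false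

variable {α : Type*} [Fintype α]

lemma mrank_cast (M : Matroid α) (S : Set α) : (mrank M S : ℕ∞) = M.eRk S := by
  obtain ⟨I, hI⟩ := M.exists_isBasis' S
  have h1 : mrank M S = I.ncard := by
    unfold mrank
    apply le_antisymm
    · refine csSup_le (s := {n : ℕ | ∃ J ⊆ S, M.Indep J ∧ J.ncard = n})
        ⟨I.ncard, I, hI.subset, hI.indep, rfl⟩ ?_
      rintro n ⟨J, hJ, hJi, rfl⟩
      have := hJi.encard_le_eRk_of_subset hJ
      rw [hI.eRk_eq_encard, ← (Set.toFinite J).cast_ncard_eq, ← (Set.toFinite I).cast_ncard_eq] at this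
      exact_mod_cast this
    · apply le_csSup
      · refine ⟨Fintype.card α, ?_⟩
        rintro n ⟨J, hJ, hJi, rfl⟩
        rw [← Nat.card_eq_fintype_card]
        exact Set.ncard_le_card J
      · exact ⟨I, hI.subset, hI.indep, rfl⟩
  rw [h1, hI.eRk_eq_encard, (Set.toFinite I).cast_ncard_eq]

lemma mrank_le_card (M : Matroid α) (S : Finset α) : mrank M (S : Set α) ≤ S.card := by
  have := M.eRk_le_encard (S : Set α)
  rw [← mrank_cast, Set.encard_coe_eq_coe_finsetCard] at this
  exact_mod_cast this

lemma mrank_le_univ (M : Matroid α) (S : Set α) : mrank M S ≤ mrank M Set.univ := by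
  have := M.eRk_mono (Set.subset_univ S)
  rw [← mrank_cast, ← mrank_cast] at this
  exact_mod_cast this

lemma mrank_dual (M : Matroid α) (hE : M.E = Set.univ) (S : Finset α) :
    mrank M✶ (S : Set α) + mrank M Set.univ = mrank M ((Sᶜ : Finset α) : Set α) + S.card := by
  have := M.eRk_dual_add_eRank (S : Set α) (by simp [hE])
  rw [Matroid.eRank_def, hE, ← mrank_cast, ← mrank_cast, ← mrank_cast,
    Set.encard_coe_eq_coe_finsetCard, ← Set.compl_eq_univ_sdiff, ← Finset.coe_compl] at this
  exact_mod_cast this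

lemma tutte_dual (M : Matroid α) (hE : M.E = Set.univ) (x y : ℝ) :
    matroidTutte M✶ x y = matroidTutte M y x := by
  unfold matroidTutte
  rw [← Equiv.sum_comp (Function.Involutive.toPerm (compl : Finset α → Finset α) compl_involutive)]
  · apply Finset.sum_congr rfl
    intro S _
    simp only [Function.Involutive.coe_toPerm]
    have h1 := mrank_dual M hE (Sᶜ)
    have h2 := mrank_dual M hE Finset.univ
    have h3 := mrank_le_univ M (S : Set α)
    have h4 := mrank_le_card M S
    have h5 := mrank_le_univ M✶ ((Sᶜ : Finset α) : Set α)
    have h6 := mrank_le_card M✶ Sᶜ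
    have h7 : Sᶜ.card + S.card = (Finset.univ : Finset α).card := by
      rw [Finset.card_compl]; have := Finset.card_le_univ S
      simp; omega
    have h8 := mrank_le_card M ∅
    simp only [compl_compl, Finset.coe_univ, Finset.compl_univ, Finset.coe_empty, Finset.card_empty] at *
    rw [mul_comm]
    congr 2 <;> omega

lemma isBase_iff (M : Matroid α) (S : Finset α) :
    M.IsBase (S : Set α) ↔ mrank M Set.univ = mrank M (S : Set α) ∧ mrank M (S : Set α) = S.card := by
  have e1 := mrank_cast M (S : Set α)
  have e2 := mrank_cast M Set.univ
  rw [Matroid.eRk_univ_eq] at e2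
  constructor
  · intro h
    have h1 := h.eRk_eq_eRank
    have h2 := h.encard_eq_eRank
    rw [← e1, ← e2] at h1
    rw [← e2, Set.encard_coe_eq_coe_finsetCard] at h2
    have h1' : mrank M (S : Set α) = mrank M Set.univ := by exact_mod_cast h1
    have h2' : S.card = mrank M Set.univ := by exact_mod_cast h2
    omega
  · rintro ⟨h1, h2⟩
    have hi : M.Indep (S : Set α) := by
      rw [Matroid.indep_iff_eRk_eq_encard_of_finite (S.finite_toSet), ← e1,
        Set.encard_coe_eq_coe_finsetCard, h2]
    apply hi.isBase_of_eRk_ge S.finite_toSet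
    rw [← e1, ← e2, h1]

/-- finset of bases -/
noncomputable def bases (M : Matroid α) : Finset (Finset α) :=
  Finset.univ.filter fun S => M.IsBase (S : Set α)

lemma tutte_one_one (M : Matroid α) : matroidTutte M 1 1 = (bases M).card := by
  unfold matroidTutte bases
  rw [Finset.card_filter, Nat.cast_sum]
  apply Finset.sum_congr rfl
  intro S _
  have h3 := mrank_le_univ M (S : Set α)
  have h4 := mrank_le_card M S
  simp only [sub_self]
  by_cases h : M.IsBase (S : Set α)
  · rw [if_pos h]
    rw [isBase_iff] at h
    rw [h.1, h.2]; simp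
  · rw [if_neg h]
    rw [isBase_iff] at h
    rcases Nat.eq_or_lt_of_le h3 with h5 | h5
    · have : S.card - mrank M (S : Set α) ≠ 0 := by
        intro h6; apply h; omega
      simp [this]
    · have : mrank M Set.univ - mrank M (S : Set α) ≠ 0 := by omega
      simp [this]

/-- broken-circuit activity -/
def Act (M : Matroid α) (k : α → ℕ) (S : Finset α) (e : α) : Prop :=
  e ∈ M.closure {f | f ∈ S ∧ k e < k f}

lemma act_mono (M : Matroid α) (k : α → ℕ) {S T : Finset α} (h : S ⊆ T) {e : α} (ha : Act M k S e) :
    Act M k T e :=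
  by
  unfold Act at *
  refine M.closure_subset_closure ?_ ha
  rintro f ⟨h1, h2⟩
  exact ⟨h h1, h2⟩

noncomputable def nbc (M : Matroid α) (k : α → ℕ) : Finset (Finset α) :=
  Finset.univ.filter fun S => ∀ e, ¬ Act M k S e

noncomputable def tog (S : Finset α) (e : α) : Finset α := if e ∈ S then S.erase e else insert e S

lemma mem_tog_ne (S : Finset α) {e f : α} (h : f ≠ e) : f ∈ tog S e ↔ f ∈ S := by
  unfold tog; split_ifs <;> simp [h]

lemma mem_tog_self (S : Finset α) {e : α} : e ∈ tog S e ↔ e ∉ S := by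
  unfold tog; split_ifs <;> simp_all

lemma tog_tog (S : Finset α) (e : α) : tog (tog S e) e = S := by
  ext f
  by_cases h : f = e
  · subst h; simp [mem_tog_self]
  · simp [mem_tog_ne _ h]

lemma act_tog (M : Matroid α) (k : α → ℕ) (S : Finset α) (e e' : α)
    (ha : Act M k S e) (hle : k e' ≤ k e) : Act M k (tog S e) e' ↔ Act M k S e' := by
  unfold Act at *
  rcases Nat.eq_or_lt_of_le hle with h | h
  · have : {f | f ∈ tog S e ∧ k e' < k f} = {f | f ∈ S ∧ k e' < k f} := by
      ext f
      by_cases hf : f = e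
      · subst hf; simp [h]
      · simp [mem_tog_ne _ hf]
    rw [this]
  · set X := {f | f ∈ S.erase e ∧ k e' < k f} with hX
    have hcl : e ∈ M.closure X := by
      refine M.closure_subset_closure ?_ ha
      rintro f ⟨hf, hf'⟩
      refine ⟨Finset.mem_erase.2 ⟨?_, hf⟩, h.trans hf'⟩
      rintro rfl; omega
    have key : ∀ T : Finset α, (∀ f, f ≠ e → (f ∈ T ↔ f ∈ S)) →
        M.closure {f | f ∈ T ∧ k e' < k f} = M.closure X := by
      intro T hT
      by_cases heT : e ∈ T
      · have : {f | f ∈ T ∧ k e' < k f} = insert e X := by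
          ext f
          by_cases hf : f = e
          · subst hf; simp [h, heT]
          · simp [hX, hT f hf, hf]
        rw [this, Matroid.closure_insert_eq_of_mem_closure hcl]
      · congr 1
        ext f
        by_cases hf : f = e
        · subst hf; simp [hX, heT]
        · simp [hX, hT f hf, hf]
    rw [key (tog S e) (fun f hf => mem_tog_ne S hf), key S (fun _ _ => Iff.rfl)]

lemma sign_tog (M : Matroid α) (k : α → ℕ) (S : Finset α) (e : α) (ha : Act M k S e) :
    (-1 : ℝ) ^ (S.card - mrank M (S : Set α)) +
      (-1 : ℝ) ^ ((tog S e).card - mrank M (tog S e : Set α)) = 0 := by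
  have key : ∀ T : Finset α, e ∉ T → Act M k T e →
      (-1 : ℝ) ^ (T.card - mrank M (T : Set α)) +
      (-1 : ℝ) ^ ((insert e T).card - mrank M ((insert e T : Finset α) : Set α)) = 0 := by
    intro T heT hT
    have hcl : e ∈ M.closure (T : Set α) := M.closure_subset_closure (fun f hf => hf.1) hT
    have hr : mrank M ((insert e T : Finset α) : Set α) = mrank M (T : Set α) := by
      have := M.eRk_closure_eq (insert e (T : Set α))
      rw [Matroid.closure_insert_eq_of_mem_closure hcl, M.eRk_closure_eq, ← Finset.coe_insert,
        ← mrank_cast, ← mrank_cast] at this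
      exact_mod_cast this.symm
    rw [hr, Finset.card_insert_of_notMem heT,
      Nat.sub_add_comm (mrank_le_card M T), pow_succ]
    ring
  unfold tog
  split_ifs with h
  · have h1 : Act M k (S.erase e) e := by
      have := (act_tog M k S e e ha le_rfl).2 ha
      simpa [tog, h] using this
    have := key (S.erase e) (by simp) h1
    rw [Finset.insert_erase h] at this
    linarith
  · exact key S h ha

lemma tutte_two_zero (M : Matroid α) (hE : M.E = Set.univ) (k : α → ℕ) (hk : Function.Injective k) :
    matroidTutte M 2 0 = (nbc M k).card := by
  have h0 : ∑ S ∈ Finset.univ.filter (fun S : Finset α => ¬ ∀ e, ¬ Act M k S e),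
      (-1 : ℝ) ^ (S.card - mrank M (S : Set α)) = 0 := by
    have hex : ∀ S : Finset α, (¬ ∀ e, ¬ Act M k S e) →
        ∃ e, Act M k S e ∧ ∀ e', Act M k S e' → k e ≤ k e' := by
      intro S hS
      push Not at hS
      obtain ⟨e, he, hmin⟩ := Set.exists_min_image {e | Act M k S e} k (Set.toFinite _) hS
      exact ⟨e, he, hmin⟩
    rcases isEmpty_or_nonempty α with hemp | hne
    · rw [Finset.filter_false_of_mem, Finset.sum_empty]
      intro S _ h
      exact h fun e => hemp.elim e
    choose! g hg1 hg2 using hex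
    have hns : ∀ S : Finset α, (¬ ∀ e, ¬ Act M k S e) → ¬ ∀ e, ¬ Act M k (tog S (g S)) e := by
      intro S hS h
      exact h (g S) ((act_tog M k S _ _ (hg1 S hS) le_rfl).2 (hg1 S hS))
    have hgt : ∀ S : Finset α, (¬ ∀ e, ¬ Act M k S e) → g (tog S (g S)) = g S := by
      intro S hS
      have a1 := (act_tog M k S _ _ (hg1 S hS) le_rfl).2 (hg1 S hS)
      have l1 := hg2 _ (hns S hS) _ a1
      have a2 := (act_tog M k S _ _ (hg1 S hS) l1).1 (hg1 _ (hns S hS))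
      exact hk (le_antisymm l1 (hg2 S hS _ a2))
    refine Finset.sum_involution (fun S _ => tog S (g S)) ?_ ?_ ?_ ?_
    · intro S hS
      exact sign_tog M k S (g S) (hg1 S (Finset.mem_filter.1 hS).2)
    · intro S hS _ h
      have := mem_tog_self S (e := g S)
      rw [h] at this
      tauto
    · intro S hS
      exact Finset.mem_filter.2 ⟨Finset.mem_univ _, hns S (Finset.mem_filter.1 hS).2⟩
    · intro S hS
      rw [hgt S (Finset.mem_filter.1 hS).2, tog_tog]
  have h1 : ∀ S ∈ nbc M k, (-1 : ℝ) ^ (S.card - mrank M (S : Set α)) = 1 := by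
    intro S hS
    have hS' := (Finset.mem_filter.1 hS).2
    have hi : M.Indep (S : Set α) := by
      rw [Matroid.indep_iff_forall_subset_not_isCircuit (by simp [hE])]
      intro C hCS hC
      obtain ⟨e, he, hmin⟩ := Set.exists_min_image C k (Set.toFinite _) hC.nonempty
      apply hS' e
      refine M.closure_subset_closure ?_ (hC.mem_closure_sdiff_singleton_of_mem he)
      rintro f ⟨hf, hf'⟩
      refine ⟨hCS hf, lt_of_le_of_ne (hmin f hf) fun h => hf' (hk h).symm⟩
    have h2 := hi.eRk_eq_encard
    rw [← mrank_cast, Set.encard_coe_eq_coe_finsetCard] at h2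
    have h2' : mrank M (S : Set α) = S.card := by exact_mod_cast h2
    simp [h2']
  have h3 : matroidTutte M 2 0 = ∑ S : Finset α, (-1 : ℝ) ^ (S.card - mrank M (S : Set α)) := by
    unfold matroidTutte
    apply Finset.sum_congr rfl
    intro S _
    norm_num
  rw [h3, ← Finset.sum_filter_add_sum_filter_not _ (fun S : Finset α => ∀ e, ¬ Act M k S e), h0, add_zero]
  change ∑ S ∈ nbc M k, _ = _
  rw [Finset.sum_congr rfl h1]
  simp

/-- neighbours in the basis exchange graph -/
noncomputable def nb (M : Matroid α) (B : Finset α) (e : α) : Finset α :=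
  Finset.univ.filter fun f =>
    (e ∈ B ∧ f ∉ B ∧ M.IsBase (insert f ((B : Set α) \ {e}))) ∨
    (e ∉ B ∧ f ∈ B ∧ M.IsBase (insert e ((B : Set α) \ {f})))

lemma mem_nb (M : Matroid α) (B : Finset α) (e f : α) : f ∈ nb M B e ↔
    (e ∈ B ∧ f ∉ B ∧ M.IsBase (insert f ((B : Set α) \ {e}))) ∨
    (e ∉ B ∧ f ∈ B ∧ M.IsBase (insert e ((B : Set α) \ {f}))) := by simp [nb]

lemma nb_symm (M : Matroid α) (B : Finset α) (e f : α) : f ∈ nb M B e ↔ e ∈ nb M B f := by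
  rw [mem_nb, mem_nb]; tauto

lemma nb_circuit (M : Matroid α) (hE : M.E = Set.univ) (B : Finset α) (hB : M.IsBase (B : Set α))
    (e : α) (he : e ∉ B) : M.IsCircuit (insert e (nb M B e : Set α)) := by
  have hc := hB.fundCircuit_isCircuit (x := e) (by simp [hE]) (by simpa using he)
  convert hc using 1
  have hcl : e ∈ M.closure (B : Set α) := by rw [hB.closure_eq, hE]; trivial
  ext f
  by_cases hfe : f = e
  · subst hfe; simp [Matroid.mem_fundCircuit]
  rw [hB.indep.mem_fundCircuit_iff hcl (by simpa using he)]
  simp only [Set.mem_insert_iff, hfe, false_or, Finset.mem_coe, mem_nb, he, false_and, not_false_eq_true, true_and]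
  constructor
  · rintro ⟨hf, h⟩
    rw [← Set.insert_sdiff_singleton_comm (Ne.symm hfe)]
    exact h.indep
  · intro h
    rw [← Set.insert_sdiff_singleton_comm (Ne.symm hfe)] at h
    have hf : f ∈ B := by
      by_contra hf
      rw [Set.sdiff_singleton_eq_self (by simpa using hf)] at h
      have := (hB.indep.mem_closure_iff_of_notMem (by simpa using he)).1 hcl
      exact this.not_indep h
    refine ⟨hf, ?_⟩
    exact hB.exchange_isBase_of_indep' (by simpa using hf) (by simpa using he)
      (by rwa [← Set.insert_sdiff_singleton_comm (Ne.symm hfe)]) |> fun h => by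
        rwa [← Set.insert_sdiff_singleton_comm (Ne.symm hfe)] at h

lemma nb_dual (M : Matroid α) (hE : M.E = Set.univ) (B : Finset α) (e : α) :
    nb M✶ Bᶜ e = nb M B e := by
  have key : ∀ e f : α, e ∈ B → f ∉ B →
     (M✶.IsBase (insert e (((Bᶜ : Finset α) : Set α) \ {f})) ↔ M.IsBase (insert f ((B : Set α) \ {e}))) := by
    intro e f he hf
    have hef : e ≠ f := by rintro rfl; exact hf he
    rw [Matroid.dual_isBase_iff (by simp [hE]), hE]
    have : Set.univ \ (insert e (((Bᶜ : Finset α) : Set α) \ {f})) = insert f ((B : Set α) \ {e}) := by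
      ext g
      by_cases h1 : g = e
      · subst h1; simp [hef]
      · by_cases h2 : g = f
        · subst h2; simp [h1]
        · simp [h1, h2]
    rw [this]
  ext f
  rw [mem_nb, mem_nb]
  simp only [Finset.mem_compl, not_not]
  by_cases he : e ∈ B <;> by_cases hf : f ∈ B
  · simp [he, hf]
  · simpa [he, hf] using key e f he hf
  · simpa [he, hf] using key f e hf he
  · simp [he, hf]

noncomputable def ia (M : Matroid α) (k : α → ℕ) (B : Finset α) : Finset α :=
  B.filter fun e => ∀ f ∈ nb M B e, k e < k f

def noEa (M : Matroid α) (k : α → ℕ) (B : Finset α) : Prop :=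
  ∀ e, e ∉ B → ∃ f ∈ nb M B e, k f < k e

lemma noEa_act (M : Matroid α) (k : α → ℕ) (B : Finset α)
    (hB : M.IsBase (B : Set α)) (h : noEa M k B) (e : α) : ¬ Act M k B e := by
  intro ha
  by_cases he : e ∈ B
  · have := (Matroid.indep_iff_forall_notMem_closure_sdiff'.1 hB.indep).2 e (by simpa using he)
    apply this
    refine M.closure_subset_closure ?_ ha
    rintro f ⟨hf, hf'⟩
    refine ⟨hf, ?_⟩
    rintro rfl; omega
  · obtain ⟨f, hf, hlt⟩ := h e he
    rw [mem_nb] at hf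
    simp only [he, false_and, not_false_eq_true, true_and, false_or] at hf
    obtain ⟨hfB, hb⟩ := hf
    have h2 := (Matroid.indep_iff_forall_notMem_closure_sdiff'.1 hb.indep).2 e (by simp)
    apply h2
    refine M.closure_subset_closure ?_ ha
    rintro g ⟨hg, hg'⟩
    refine ⟨Or.inr ⟨hg, ?_⟩, ?_⟩
    · rintro rfl; omega
    · rintro rfl; omega

lemma inj_aux (M : Matroid α) (hE : M.E = Set.univ) (k : α → ℕ) (B B' J J' : Finset α)
    (hB : M.IsBase (B : Set α)) (hB' : M.IsBase (B' : Set α)) (hJ : J ⊆ ia M k B)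
    (heq : B \ J = B' \ J') (e : α) (he' : e ∈ B') (he : e ∉ B)
    (hmin : ∀ f, k f < k e → (f ∈ B ↔ f ∈ B')) : False := by
  have hc := nb_circuit M hE B hB e he
  have hcl := hc.mem_closure_sdiff_singleton_of_mem (Set.mem_insert e _)
  refine (Matroid.indep_iff_forall_notMem_closure_sdiff'.1 hB'.indep).2 e (by simpa using he') ?_
  refine M.closure_subset_closure ?_ hcl
  rintro f ⟨hf, hfe⟩
  refine ⟨?_, hfe⟩
  have hf1 : f ∈ nb M B e := by
    rcases hf with h | h
    · exact absurd h hfe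
    · exact h
  have hfB : f ∈ B := by
    rw [mem_nb] at hf1
    tauto
  by_cases hfJ : f ∈ J
  · have := (Finset.mem_filter.1 (hJ hfJ)).2 e ((nb_symm M B e f).1 hf1)
    exact (hmin f this).1 hfB
  · have : f ∈ B' \ J' := by rw [← heq]; simp [hfB, hfJ]
    exact (Finset.mem_sdiff.1 this).1

lemma tutte_two_zero_ge (M : Matroid α) (hE : M.E = Set.univ) (k : α → ℕ)
    (hk : Function.Injective k) :
    ∑ B ∈ bases M, (if noEa M k B then (2 : ℝ) ^ (ia M k B).card else 0) ≤ matroidTutte M 2 0 := by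
  rw [tutte_two_zero M hE k hk, ← Finset.sum_filter]
  have : ∑ B ∈ (bases M).filter (noEa M k), (2 : ℝ) ^ (ia M k B).card =
      (((bases M).filter (noEa M k)).sigma (fun B => (ia M k B).powerset)).card := by
    rw [Finset.card_sigma]
    push_cast
    apply Finset.sum_congr rfl
    intro B _
    rw [Finset.card_powerset]; push_cast; rfl
  rw [this]
  norm_cast
  apply Finset.card_le_card_of_injOn (fun p => p.1 \ p.2)
  · rintro ⟨B, J⟩ h
    simp only [Finset.coe_sigma, Set.mem_sigma_iff, Finset.mem_coe, Finset.mem_filter, bases, Finset.mem_univ, true_and] at h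
    simp only [nbc, Finset.coe_filter, Finset.mem_univ, true_and, Set.mem_ofPred_eq]
    intro e ha
    exact noEa_act M k B h.1.1 h.1.2 e (act_mono M k Finset.sdiff_subset ha)
  · rintro ⟨B, J⟩ h ⟨B', J'⟩ h' heq
    simp only [Finset.coe_sigma, Set.mem_sigma_iff, Finset.mem_coe, Finset.mem_filter, bases, Finset.mem_univ, true_and, Finset.mem_powerset] at h h'
    simp only at heq
    have hBB : B = B' := by
      by_contra hne
      have hne' : {e | ¬ (e ∈ B ↔ e ∈ B')}.Nonempty := by
        by_contra hh
        rw [Set.not_nonempty_iff_eq_empty] at hh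
        apply hne
        ext e
        by_contra h3
        have : e ∈ {e | ¬ (e ∈ B ↔ e ∈ B')} := h3
        rw [hh] at this; exact this
      obtain ⟨e, he, hm⟩ := Set.exists_min_image _ k (Set.toFinite _) hne'
      have hmin : ∀ f, k f < k e → (f ∈ B ↔ f ∈ B') := by
        intro f hf
        by_contra h3
        have := hm f h3
        omega
      simp only [Set.mem_ofPred_eq] at he
      by_cases h1 : e ∈ B
      · exact inj_aux M hE k B' B J' J h'.1.1 h.1.1 h'.2 heq.symm e h1 (by tauto)
          (fun f hf => (hmin f hf).symm)
      · exact inj_aux M hE k B B' J J' h.1.1 h'.1.1 h.2 heq e (by tauto) h1 hmin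
    subst hBB
    have hJ : J ⊆ B := h.2.trans (Finset.filter_subset _ _)
    have hJ' : J' ⊆ B := h'.2.trans (Finset.filter_subset _ _)
    have : J = J' := by
      rw [← Finset.sdiff_sdiff_eq_self hJ, ← Finset.sdiff_sdiff_eq_self hJ', heq]
    subst this
    rfl

end MatroidPart
section Fkg

lemma harris {L ι : Type*} [DistribLattice L] [Fintype L] (P : Finset L) (hP : P.Nonempty)
    (hinf : ∀ a ∈ P, ∀ b ∈ P, a ⊓ b ∈ P) (hsup : ∀ a ∈ P, ∀ b ∈ P, a ⊔ b ∈ P)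
    (f : ι → L → ℝ) (hf0 : ∀ i g, 0 ≤ f i g) (hf : ∀ i, Monotone (f i)) (s : Finset ι) :
    ∏ i ∈ s, ((∑ g ∈ P, f i g) / P.card) ≤ (∑ g ∈ P, ∏ i ∈ s, f i g) / P.card := by
  have hc : (0 : ℝ) < P.card := by exact_mod_cast hP.card_pos
  induction s using Finset.induction_on with
  | empty => simp [hc.ne']
  | insert a s ha ih =>
    rw [Finset.prod_insert ha]
    have hsum : ∀ h : L → ℝ, ∑ g, (if g ∈ P then (1 : ℝ) else 0) * h g = ∑ g ∈ P, h g := by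
      intro h
      simp [ite_mul, Finset.sum_ite_mem]
    have hm : Monotone (fun g => ∏ i ∈ s, f i g) := by
      intro x y hxy
      exact Finset.prod_le_prod (fun i _ => hf0 i x) (fun i _ => hf i hxy)
    have key := fkg (μ := fun g => if g ∈ P then (1 : ℝ) else 0) (f := f a) (g := fun g => ∏ i ∈ s, f i g)
      (fun g => by simp only [Pi.zero_apply]; split_ifs <;> norm_num) (fun g => hf0 a g)
      (fun g => Finset.prod_nonneg fun i _ => hf0 i g) (hf a) hm
      (by
        intro x y
        by_cases hx : x ∈ P
        · by_cases hy : y ∈ P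
          · simp [hx, hy, hinf x hx y hy, hsup x hx y hy]
          · simp only [hy, if_false, mul_zero]
            split_ifs <;> norm_num
        · simp only [hx, if_false, zero_mul]
          split_ifs <;> norm_num)
    rw [hsum, hsum, hsum] at key
    have h1 : ∑ g, (if g ∈ P then (1 : ℝ) else 0) = P.card := by simp
    rw [h1] at key
    have h0 : 0 ≤ (∑ g ∈ P, f a g) / P.card :=
      div_nonneg (Finset.sum_nonneg fun g _ => hf0 a g) hc.le
    calc _ ≤ (∑ g ∈ P, f a g) / P.card * ((∑ g ∈ P, ∏ i ∈ s, f i g) / P.card) :=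
          mul_le_mul_of_nonneg_left ih h0
      _ ≤ _ := by
        rw [div_mul_div_comm, div_le_div_iff₀ (by positivity) hc]
        simp only [Finset.prod_insert ha]
        nlinarith

variable {α : Type*} [Fintype α]

set_option maxHeartbeats 1000000 in
lemma cyl {m : ℕ} (R : α → Finset (Fin m)) (hR : ∀ x, (R x).Nonempty) (e : α) (Nb : Finset α)
    (he : e ∉ Nb) (R' : Finset (Fin m)) (hR' : ∀ f ∈ Nb, R f = R')
    (hR'0 : R'.Nonempty) (U : Fin m → Finset (Fin m)) (hU : ∀ j, U j ⊆ R') :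
    (∑ g ∈ Fintype.piFinset R, (if ∀ f ∈ Nb, g f ∈ U (g e) then (1 : ℝ) else 0)) /
      (Fintype.piFinset R).card =
    (∑ j ∈ R e, (((U j).card : ℝ) / R'.card) ^ Nb.card) / (R e).card := by
  have hr : (0 : ℝ) < R'.card := by exact_mod_cast hR'0.card_pos
  have hre : (0 : ℝ) < (R e).card := by exact_mod_cast (hR e).card_pos
  have hP : (0 : ℝ) < (Fintype.piFinset R).card := by
    rw [Fintype.card_piFinset]
    push_cast
    exact Finset.prod_pos fun x _ => by exact_mod_cast (hR x).card_pos
  have h1 : ∑ g ∈ Fintype.piFinset R, (if ∀ f ∈ Nb, g f ∈ U (g e) then (1 : ℝ) else 0) =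
      ∑ j ∈ R e, ((Fintype.piFinset (fun x => if x = e then {j} else if x ∈ Nb then U j else R x)).card : ℝ) := by
    rw [← Finset.sum_filter, Finset.sum_const, nsmul_eq_mul, mul_one,
      Finset.card_eq_sum_card_fiberwise (f := fun g : α → Fin m => g e) (t := R e)]
    · push_cast
      apply Finset.sum_congr rfl
      intro j hj
      congr 2
      ext g
      simp only [Finset.mem_filter, Fintype.mem_piFinset]
      constructor
      · rintro ⟨⟨h1, h2⟩, h3⟩ x
        split_ifs with hx hx'
        · subst hx; simp [h3]
        · rw [← h3]; exact h2 x hx'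
        · exact h1 x
      · intro h
        have hj' : g e = j := by have := h e; simpa using this
        refine ⟨⟨?_, ?_⟩, hj'⟩
        · intro x
          have := h x
          split_ifs at this with hx hx'
          · subst hx; rw [hj']; exact hj
          · rw [hR' x hx']; exact hU j this
          · exact this
        · intro f hf
          have := h f
          have hfe : f ≠ e := by rintro rfl; exact he hf
          simp only [hfe, if_false, hf, if_true] at this
          rw [hj']; exact this
    · intro g hg
      have := (Finset.mem_filter.1 hg).1
      exact Fintype.mem_piFinset.1 this e
  have h2 : ∀ j, ((Fintype.piFinset (fun x => if x = e then {j} else if x ∈ Nb then U j else R x)).card : ℝ) =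
      (Fintype.piFinset R).card * ((1 / (R e).card) * (((U j).card : ℝ) / R'.card) ^ Nb.card) := by
    intro j
    rw [Fintype.card_piFinset, Fintype.card_piFinset]
    push_cast
    have e1 : (1 / ((R e).card : ℝ)) = ∏ x : α, (if x = e then 1 / ((R e).card : ℝ) else 1) := by simp
    have e2 : (((U j).card : ℝ) / R'.card) ^ Nb.card =
        ∏ x : α, (if x ∈ Nb then (((U j).card : ℝ) / R'.card) else 1) := by
      rw [Finset.prod_ite_mem]; simp [div_pow]
    rw [e1, e2, ← Finset.prod_mul_distrib, ← Finset.prod_mul_distrib]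
    apply Finset.prod_congr rfl
    intro x _
    by_cases hx : x = e
    · subst hx; simp [he, hre.ne']
    · by_cases hx' : x ∈ Nb
      · simp only [hx, hx', if_true, if_false, hR' x hx']
        field_simp
      · simp [hx, hx']
  rw [h1, Finset.sum_congr rfl (fun j _ => h2 j), ← Finset.mul_sum, ← Finset.mul_sum,
    mul_div_cancel_left₀ _ hP.ne', one_div, inv_mul_eq_div]

lemma powsum_bound (d n : ℕ) :
    ((n : ℝ) ^ (d + 1) / (d + 1) ≤ ∑ j ∈ Finset.range n, ((j : ℝ) + 1) ^ d) ∧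
    (∑ j ∈ Finset.range n, (j : ℝ) ^ d ≤ (n : ℝ) ^ (d + 1) / (d + 1)) := by
  have step : ∀ x : ℝ, 0 ≤ x → (x + 1) ^ (d + 1) - x ^ (d + 1) ≤ (d + 1) * (x + 1) ^ d ∧
      (d + 1) * x ^ d ≤ (x + 1) ^ (d + 1) - x ^ (d + 1) := by
    intro x hx
    induction d with
    | zero => simp
    | succ d ih =>
      obtain ⟨i1, i2⟩ := ih
      have p1 : x ^ (d + 1) ≤ (x + 1) ^ (d + 1) := by gcongr; linarith
      push_cast
      constructor
      · have : (x + 1) ^ (d + 1 + 1) - x ^ (d + 1 + 1) =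
            (x + 1) * ((x + 1) ^ (d + 1) - x ^ (d + 1)) + x ^ (d + 1) := by ring
        rw [this]
        have := mul_le_mul_of_nonneg_left i1 (by linarith : 0 ≤ x + 1)
        have e : (x + 1) * ((d + 1) * (x + 1) ^ d) = (d + 1) * (x + 1) ^ (d + 1) := by ring
        nlinarith
      · have : (x + 1) ^ (d + 1 + 1) - x ^ (d + 1 + 1) =
            x * ((x + 1) ^ (d + 1) - x ^ (d + 1)) + (x + 1) ^ (d + 1) := by ring
        rw [this]
        have := mul_le_mul_of_nonneg_left i2 hx
        have e : x * ((d + 1) * x ^ d) = (d + 1) * x ^ (d + 1) := by ring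
        nlinarith
  have hd : (0 : ℝ) < d + 1 := by positivity
  induction n with
  | zero => simp
  | succ n ih =>
    obtain ⟨s1, s2⟩ := step n (by positivity)
    rw [div_le_iff₀ hd, le_div_iff₀ hd] at *
    rw [Finset.sum_range_succ, Finset.sum_range_succ]
    push_cast
    obtain ⟨i1, i2⟩ := ih
    constructor
    · rw [add_mul]; linarith
    · rw [add_mul]; linarith

/-- upper and lower estimates of the normalised power sums -/
lemma powsum_lower (d n : ℕ) (hn : 0 < n) :
    (n : ℝ) / (d + 1) - 1 ≤ ∑ j ∈ Finset.range n, ((j : ℝ) / n) ^ d := by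
  have hn' : (0 : ℝ) < n := by exact_mod_cast hn
  have h := (powsum_bound d n).1
  have e1 : ∑ j ∈ Finset.range n, ((j : ℝ) + 1) ^ d ≤ ∑ j ∈ Finset.range n, (j : ℝ) ^ d + (n : ℝ) ^ d := by
    have := Finset.sum_range_succ (fun j : ℕ => (j : ℝ) ^ d) n
    rw [Finset.sum_range_succ'] at this
    push_cast at this
    have h0 : (0 : ℝ) ≤ (0 : ℝ) ^ d := by positivity
    linarith
  have e2 : ∑ j ∈ Finset.range n, ((j : ℝ) / n) ^ d = (∑ j ∈ Finset.range n, (j : ℝ) ^ d) / n ^ d := by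
    rw [Finset.sum_div]; simp [div_pow]
  rw [e2, le_div_iff₀ (by positivity)]
  have e3 : ((n : ℝ) / (d + 1) - 1) * n ^ d = (n : ℝ) ^ (d + 1) / (d + 1) - n ^ d := by
    rw [pow_succ]; ring
  rw [e3]; linarith

lemma powsum_upper (d n : ℕ) (hn : 0 < n) :
    ∑ j ∈ Finset.range n, (((j : ℝ) + 1) / n) ^ d ≤ (n : ℝ) / (d + 1) + 1 := by
  have hn' : (0 : ℝ) < n := by exact_mod_cast hn
  have h := (powsum_bound d n).2
  have e1 : ∑ j ∈ Finset.range n, ((j : ℝ) + 1) ^ d ≤ ∑ j ∈ Finset.range n, (j : ℝ) ^ d + (n : ℝ) ^ d := by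
    have := Finset.sum_range_succ (fun j : ℕ => (j : ℝ) ^ d) n
    rw [Finset.sum_range_succ'] at this
    push_cast at this
    have h0 : (0 : ℝ) ≤ (0 : ℝ) ^ d := by positivity
    linarith
  have e2 : ∑ j ∈ Finset.range n, (((j : ℝ) + 1) / n) ^ d = (∑ j ∈ Finset.range n, ((j : ℝ) + 1) ^ d) / n ^ d := by
    rw [Finset.sum_div]; simp [div_pow]
  rw [e2, div_le_iff₀ (by positivity)]
  have e3 : ((n : ℝ) / (d + 1) + 1) * n ^ d = (n : ℝ) ^ (d + 1) / (d + 1) + n ^ d := by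
    rw [pow_succ]; ring
  rw [e3]; linarith

/-- vertex factor -/
noncomputable def vf (A : Finset α) (nbr : α → Finset α) (m : ℕ) (e : α) (g : α → Fin m) : ℝ :=
  if e ∈ A then (if ∀ f ∈ nbr e, m ≤ (g e : ℕ) + g f then 2 else 1)
  else (if ∃ f ∈ nbr e, m ≤ (g e : ℕ) + g f then 1 else 0)

lemma vf_nonneg (A : Finset α) (nbr : α → Finset α) (m : ℕ) (e : α) (g : α → Fin m) :
    0 ≤ vf A nbr m e g := by
  unfold vf; split_ifs <;> norm_num

lemma vf_mono (A : Finset α) (nbr : α → Finset α) (m : ℕ) (e : α) :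
    Monotone (vf A nbr m e) := by
  intro g h hgh
  have hv : ∀ x, (g x : ℕ) ≤ h x := fun x => hgh x
  unfold vf
  by_cases he : e ∈ A
  · simp only [he, if_true]
    split_ifs with h1 h2
    · norm_num
    · exact absurd (fun f hf => (h1 f hf).trans (add_le_add (hv e) (hv f))) h2
    · norm_num
    · norm_num
  · simp only [he, if_false]
    split_ifs with h1 h2
    · norm_num
    · obtain ⟨f, hf, h3⟩ := h1
      exact absurd ⟨f, hf, h3.trans (add_le_add (hv e) (hv f))⟩ h2
    · norm_num
    · norm_num

noncomputable def bigA (K d : ℕ) (ε : ℝ) : ℝ :=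
  1 + 1 / ((K : ℝ) + 2) + ((K : ℝ) + 1) / (K + 2) / (d + 1) - ε
noncomputable def bigB (K d : ℕ) (ε : ℝ) : ℝ :=
  ((K : ℝ) + 1) / (K + 2) * (1 - (((K : ℝ) + 1) / (K + 2)) ^ d * (1 / (d + 1) + ε))

/-- the box -/
noncomputable def boxR (A : Finset α) (m N : ℕ) (e : α) : Finset (Fin m) :=
  if e ∈ A then Finset.univ else Finset.univ.filter fun j => N ≤ (j : ℕ)

lemma card_ge (m c : ℕ) : (Finset.univ.filter fun j : Fin m => c ≤ (j : ℕ)).card = m - c := by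
  have := Fin.sum_univ_eq_sum_range (fun j => if c ≤ j then 1 else 0) m
  rw [Finset.card_filter, this, ← Finset.card_filter]
  have : (Finset.range m).filter (fun j => c ≤ j) = Finset.Ico c m := by
    ext j; simp; omega
  rw [this]; simp

lemma card_lt (m c : ℕ) (h : c ≤ m) : (Finset.univ.filter fun j : Fin m => (j : ℕ) < c).card = c := by
  have := Fin.sum_univ_eq_sum_range (fun j => if j < c then 1 else 0) m
  rw [Finset.card_filter, this, ← Finset.card_filter]
  have : (Finset.range m).filter (fun j => j < c) = Finset.range c := by
    ext j; simp; omega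
  rw [this]; simp

lemma avg_A (A : Finset α) (nbr : α → Finset α) (K N : ℕ) (hN : 0 < N) (e : α) (he : e ∈ A)
    (hnb : ∀ f ∈ nbr e, f ∉ A) :
    bigA K (nbr e).card (1 / N) ≤
    (∑ g ∈ Fintype.piFinset (boxR A ((K + 2) * N) N), vf A nbr ((K + 2) * N) e g) /
      (Fintype.piFinset (boxR A ((K + 2) * N) N)).card := by
  set m := (K + 2) * N with hm
  have hmn : m - N = (K + 1) * N := by rw [hm]; have : (K + 2) * N = (K + 1) * N + N := by ring
                                       omega
  have hmpos : 0 < m := by positivity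
  have hnpos : 0 < (K + 1) * N := by positivity
  set n := (K + 1) * N with hn
  have hmn' : m = n + N := by rw [hm, hn]; ring
  set d := (nbr e).card
  have hRne : ∀ x, (boxR A m N x).Nonempty := by
    intro x
    unfold boxR
    refine ⟨⟨m - 1, by omega⟩, ?_⟩
    split_ifs <;> simp
    omega
  have hPc : (0 : ℝ) < (Fintype.piFinset (boxR A m N)).card := by
    rw [Fintype.card_piFinset]
    push_cast
    exact Finset.prod_pos fun x _ => by exact_mod_cast (hRne x).card_pos
  have c := cyl (boxR A m N) hRne e (nbr e) (fun h => hnb e h he)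
    (Finset.univ.filter fun j => N ≤ (j : ℕ)) (fun f hf => by simp [boxR, hnb f hf])
    ⟨⟨m - 1, by omega⟩, by simp; omega⟩
    (fun j => Finset.univ.filter fun x => max N (m - j) ≤ (x : ℕ))
    (fun j x hx => by simp at hx ⊢; exact hx.1)
  have hv : ∑ g ∈ Fintype.piFinset (boxR A m N), vf A nbr m e g =
      (Fintype.piFinset (boxR A m N)).card + ∑ g ∈ Fintype.piFinset (boxR A m N),
        (if ∀ f ∈ nbr e, g f ∈ (Finset.univ.filter fun x : Fin m => max N (m - (g e : ℕ)) ≤ (x : ℕ)) then (1 : ℝ) else 0) := by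
    have : ((Fintype.piFinset (boxR A m N)).card : ℝ) = ∑ g ∈ Fintype.piFinset (boxR A m N), 1 := by simp
    rw [this, ← Finset.sum_add_distrib]
    apply Finset.sum_congr rfl
    intro g hg
    unfold vf
    have hiff : (∀ f ∈ nbr e, m ≤ (g e : ℕ) + g f) ↔
        (∀ f ∈ nbr e, g f ∈ (Finset.univ.filter fun x : Fin m => max N (m - (g e : ℕ)) ≤ (x : ℕ))) := by
      apply forall₂_congr
      intro f hf
      have h1 := Fintype.mem_piFinset.1 hg f
      simp [boxR, hnb f hf] at h1
      simp
      omega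
    simp only [he, if_true]
    rw [if_congr hiff rfl rfl]
    split_ifs <;> norm_num
  rw [hv, add_div, c, div_self hPc.ne']
  have hRe : boxR A m N e = Finset.univ := by simp [boxR, he]
  rw [hRe, Finset.card_univ, Fintype.card_fin, card_ge, hmn]
  have hsum : (n : ℝ) / (d + 1) - 1 + N ≤ ∑ j : Fin m, ((((Finset.univ.filter fun x : Fin m => max N (m - (j : ℕ)) ≤ (x : ℕ)).card : ℕ) : ℝ) / n) ^ d := by
    simp only [card_ge]
    rw [Fin.sum_univ_eq_sum_range (fun j => (((m - max N (m - j) : ℕ) : ℝ) / n) ^ d) m, hmn',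
      Finset.sum_range_add]
    have a1 : ∑ j ∈ Finset.range n, (((n + N - max N (n + N - j) : ℕ) : ℝ) / n) ^ d =
        ∑ j ∈ Finset.range n, ((j : ℝ) / n) ^ d := by
      apply Finset.sum_congr rfl
      intro j hj
      have := Finset.mem_range.1 hj
      congr 3
      omega
    have a2 : ∑ j ∈ Finset.range N, (((n + N - max N (n + N - (n + j)) : ℕ) : ℝ) / n) ^ d = N := by
      have : ∀ j ∈ Finset.range N, (((n + N - max N (n + N - (n + j)) : ℕ) : ℝ) / n) ^ d = 1 := by
        intro j hj
        have := Finset.mem_range.1 hj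
        have e : n + N - max N (n + N - (n + j)) = n := by omega
        rw [e, div_self (by positivity), one_pow]
      rw [Finset.sum_congr rfl this]; simp
    rw [a1, a2]
    have := powsum_lower d n hnpos
    linarith
  have hfin : bigA K d (1 / N) ≤ 1 + ((n : ℝ) / (d + 1) - 1 + N) / m := by
    unfold bigA
    have hN' : (0 : ℝ) < N := by exact_mod_cast hN
    rw [hm, hn]
    push_cast
    have e1 : (((K : ℝ) + 1) * N / (d + 1) - 1 + N) / ((K + 2) * N) =
       1 / ((K : ℝ) + 2) + ((K : ℝ) + 1) / (K + 2) / (d + 1) - 1 / ((K + 2) * N) := by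
      field_simp
      ring
    rw [e1]
    have : 1 / (((K : ℝ) + 2) * N) ≤ 1 / N := by
      apply one_div_le_one_div_of_le hN'
      have : (0 : ℝ) ≤ K := by positivity
      nlinarith
    linarith
  refine hfin.trans ?_
  have hm' : (0 : ℝ) < m := by exact_mod_cast hmpos
  gcongr

lemma avg_B (A : Finset α) (nbr : α → Finset α) (K N : ℕ) (hN : 0 < N) (e : α) (he : e ∉ A)
    (hnb : ∀ f ∈ nbr e, f ∈ A) :
    bigB K (nbr e).card (1 / N) ≤ ((K : ℝ) + 1) / (K + 2) *
    ((∑ g ∈ Fintype.piFinset (boxR A ((K + 2) * N) N), vf A nbr ((K + 2) * N) e g) /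
      (Fintype.piFinset (boxR A ((K + 2) * N) N)).card) := by
  set m := (K + 2) * N with hm
  have hmpos : 0 < m := by positivity
  have hnpos : 0 < (K + 1) * N := by positivity
  set n := (K + 1) * N with hn
  have hmn' : m = n + N := by rw [hm, hn]; ring
  set d := (nbr e).card
  have hRne : ∀ x, (boxR A m N x).Nonempty := by
    intro x
    unfold boxR
    refine ⟨⟨m - 1, by omega⟩, ?_⟩
    split_ifs <;> simp
    omega
  have hPc : (0 : ℝ) < (Fintype.piFinset (boxR A m N)).card := by
    rw [Fintype.card_piFinset]
    push_cast
    exact Finset.prod_pos fun x _ => by exact_mod_cast (hRne x).card_pos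
  have c := cyl (boxR A m N) hRne e (nbr e) (fun h => he (hnb e h))
    Finset.univ (fun f hf => by simp [boxR, hnb f hf])
    ⟨⟨m - 1, by omega⟩, by simp⟩
    (fun j => Finset.univ.filter fun x => (x : ℕ) < m - j)
    (fun j x hx => by simp)
  have hv : ∑ g ∈ Fintype.piFinset (boxR A m N), vf A nbr m e g =
      (Fintype.piFinset (boxR A m N)).card - ∑ g ∈ Fintype.piFinset (boxR A m N),
        (if ∀ f ∈ nbr e, g f ∈ (Finset.univ.filter fun x : Fin m => (x : ℕ) < m - (g e : ℕ)) then (1 : ℝ) else 0) := by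
    have : ((Fintype.piFinset (boxR A m N)).card : ℝ) = ∑ g ∈ Fintype.piFinset (boxR A m N), 1 := by simp
    rw [this, ← Finset.sum_sub_distrib]
    apply Finset.sum_congr rfl
    intro g hg
    unfold vf
    have hiff : (∃ f ∈ nbr e, m ≤ (g e : ℕ) + g f) ↔
        ¬ (∀ f ∈ nbr e, g f ∈ (Finset.univ.filter fun x : Fin m => (x : ℕ) < m - (g e : ℕ))) := by
      push Not
      apply exists_congr
      intro f
      apply and_congr_right
      intro _
      simp
      omega
    simp only [he, if_false]
    rw [if_congr hiff rfl rfl]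
    split_ifs <;> norm_num
  rw [hv, sub_div, c, div_self hPc.ne']
  have hRe : boxR A m N e = Finset.univ.filter fun j : Fin m => N ≤ (j : ℕ) := by simp [boxR, he]
  have hmn : m - N = n := by omega
  rw [hRe, card_ge, Finset.card_univ, Fintype.card_fin, hmn]
  have hm' : (0 : ℝ) < m := by exact_mod_cast hmpos
  have hn' : (0 : ℝ) < n := by exact_mod_cast hnpos
  have hN' : (0 : ℝ) < N := by exact_mod_cast hN
  have hq : ((K : ℝ) + 1) / (K + 2) = n / m := by
    rw [hm, hn]; push_cast; field_simp
  have hsum : ∑ j ∈ Finset.univ.filter (fun j : Fin m => N ≤ (j : ℕ)), ((((Finset.univ.filter fun x : Fin m => (x : ℕ) < m - (j : ℕ)).card : ℕ) : ℝ) / m) ^ d ≤ ((n : ℝ) / m) ^ d * (n / (d + 1) + 1) := by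
    rw [Finset.sum_filter]
    have a0 : ∀ j : Fin m, (if N ≤ (j : ℕ) then ((((Finset.univ.filter fun x : Fin m => (x : ℕ) < m - (j : ℕ)).card : ℕ) : ℝ) / m) ^ d else 0) =
        (fun j : ℕ => if N ≤ j then (((m - j : ℕ) : ℝ) / m) ^ d else 0) j := by
      intro j
      simp only
      rw [card_lt _ _ (by omega)]
    rw [Finset.sum_congr rfl (fun j _ => a0 j), Fin.sum_univ_eq_sum_range (fun j : ℕ => if N ≤ j then (((m - j : ℕ) : ℝ) / m) ^ d else 0) m,
      ← Finset.sum_range_reflect, hmn', Finset.sum_range_add]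
    have a2 : ∑ j ∈ Finset.range N, (if N ≤ n + N - 1 - (n + j) then (((n + N - (n + N - 1 - (n + j)) : ℕ) : ℝ) / ((n + N : ℕ) : ℝ)) ^ d else 0) = 0 := by
      apply Finset.sum_eq_zero
      intro j hj
      have := Finset.mem_range.1 hj
      rw [if_neg (by omega)]
    have a1 : ∑ j ∈ Finset.range n, (if N ≤ n + N - 1 - j then (((n + N - (n + N - 1 - j) : ℕ) : ℝ) / ((n + N : ℕ) : ℝ)) ^ d else 0) =
       ((n : ℝ) / ((n + N : ℕ) : ℝ)) ^ d * ∑ j ∈ Finset.range n, (((j : ℝ) + 1) / n) ^ d := by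
      rw [Finset.mul_sum]
      apply Finset.sum_congr rfl
      intro j hj
      have := Finset.mem_range.1 hj
      rw [if_pos (by omega), ← mul_pow]
      have e : n + N - (n + N - 1 - j) = j + 1 := by omega
      rw [e]
      congr 1
      push_cast
      field_simp
    rw [a1, a2, add_zero]
    gcongr
    exact powsum_upper d n hnpos
  unfold bigB
  rw [hq]
  have : ((n : ℝ) / m) ^ d * (n / (d + 1) + 1) / n ≤ (n / m : ℝ) ^ d * (1 / (d + 1) + 1 / N) := by
    rw [mul_div_assoc]
    gcongr
    rw [add_div]
    have e1 : (n : ℝ) / (d + 1) / n = 1 / (d + 1) := by field_simp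
    rw [e1]
    gcongr
    rw [hn]
    exact Nat.le_mul_of_pos_left N (by omega)
  gcongr
  refine le_trans ?_ this
  gcongr

lemma grid_bound (A : Finset α) (nbr : α → Finset α) (K N : ℕ) (hN : 2 ≤ N)
    (hA : ∀ e ∈ A, ∀ f ∈ nbr e, f ∉ A) (hB : ∀ e, e ∉ A → ∀ f ∈ nbr e, f ∈ A)
    (hd : ∀ e, 1 ≤ (nbr e).card) :
    ((((K + 2) * N : ℕ) : ℝ) ^ (Fintype.card α)) *
      ∏ e, (if e ∈ A then bigA K (nbr e).card (1 / N) else bigB K (nbr e).card (1 / N)) ≤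
    ∑ g : α → Fin ((K + 2) * N), ∏ e, vf A nbr ((K + 2) * N) e g := by
  have hN0 : 0 < N := by omega
  have avA := avg_A A nbr K N hN0
  have avB := avg_B A nbr K N hN0
  set m := (K + 2) * N with hm
  have hmpos : 0 < m := by positivity
  have hNm : N < m := by
    have : (K + 2) * N = K * N + N + N := by ring
    have : 0 ≤ K * N := Nat.zero_le _
    omega
  have hN' : (0 : ℝ) < N := by exact_mod_cast hN0
  have hRne : ∀ x, (boxR A m N x).Nonempty := by
    intro x
    unfold boxR
    refine ⟨⟨m - 1, by omega⟩, ?_⟩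
    split_ifs <;> simp
    omega
  set P := Fintype.piFinset (boxR A m N) with hP
  have hPne : P.Nonempty := Fintype.piFinset_nonempty.2 hRne
  have hPc : (0 : ℝ) < P.card := by exact_mod_cast hPne.card_pos
  have hh := harris P hPne
    (by
      intro a ha b hb
      rw [hP, Fintype.mem_piFinset] at *
      intro x
      have h1 := ha x
      have h2 := hb x
      simp only [Pi.inf_apply]
      rcases min_choice (a x) (b x) with h | h
      · rw [← h] at h1; exact h1
      · rw [← h] at h2; exact h2)
    (by
      intro a ha b hb
      rw [hP, Fintype.mem_piFinset] at *
      intro x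
      have h1 := ha x
      have h2 := hb x
      simp only [Pi.sup_apply]
      rcases max_choice (a x) (b x) with h | h
      · rw [← h] at h1; exact h1
      · rw [← h] at h2; exact h2)
    (fun e g => vf A nbr m e g) (fun e g => vf_nonneg A nbr m e g) (fun e => vf_mono A nbr m e) Finset.univ
  rw [le_div_iff₀ hPc] at hh
  have hsub : ∑ g ∈ P, ∏ e, vf A nbr m e g ≤ ∑ g : α → Fin m, ∏ e, vf A nbr m e g :=
    Finset.sum_le_sum_of_subset_of_nonneg (Finset.subset_univ _)
      (fun g _ _ => Finset.prod_nonneg fun e _ => vf_nonneg A nbr m e g)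
  refine le_trans ?_ (hh.trans hsub)
  have hPcard : (P.card : ℝ) = ∏ e : α, ((m : ℝ) * (if e ∈ A then 1 else ((K : ℝ) + 1) / (K + 2))) := by
    rw [hP, Fintype.card_piFinset]
    push_cast
    apply Finset.prod_congr rfl
    intro e _
    unfold boxR
    split_ifs with h
    · simp
    · rw [card_ge]
      have : m - N = (K + 1) * N := by
        have : (K + 2) * N = (K + 1) * N + N := by ring
        omega
      rw [this, hm]
      push_cast
      field_simp
  obtain ⟨av, hav⟩ : ∃ av : α → ℝ, ∀ e, av e = (∑ g ∈ P, vf A nbr m e g) / P.card :=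
    ⟨_, fun _ => rfl⟩
  simp only [← hav] at avA avB ⊢
  have hmc : ((m : ℝ) ^ (Fintype.card α)) = ∏ e : α, (m : ℝ) := by simp
  rw [hPcard, hmc, ← Finset.prod_mul_distrib, ← Finset.prod_mul_distrib]
  have hNle : 1 / (N : ℝ) ≤ 1 / 2 := by
    apply one_div_le_one_div_of_le (by norm_num); exact_mod_cast hN
  have hNge : 0 ≤ 1 / (N : ℝ) := by positivity
  apply Finset.prod_le_prod
  · intro e _
    apply mul_nonneg (by positivity)
    split_ifs
    · unfold bigA
      have h1 : 0 ≤ 1 / ((K : ℝ) + 2) := by positivity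
      have h2 : 0 ≤ ((K : ℝ) + 1) / (K + 2) / ((nbr e).card + 1) := by positivity
      linarith
    · unfold bigB
      have h1 : (((K : ℝ) + 1) / (K + 2)) ^ (nbr e).card ≤ 1 := by
        apply pow_le_one₀ (by positivity)
        rw [div_le_one (by positivity)]; linarith
      have h2 : 1 / (((nbr e).card : ℝ) + 1) ≤ 1 / 2 := by
        apply one_div_le_one_div_of_le (by norm_num)
        have : (1 : ℝ) ≤ (nbr e).card := by exact_mod_cast hd e
        linarith
      have h3 : (((K : ℝ) + 1) / (K + 2)) ^ (nbr e).card * (1 / (((nbr e).card : ℝ) + 1) + 1 / N) ≤ 1 * 1 := by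
        apply mul_le_mul h1 (by linarith) (by positivity) (by norm_num)
      apply mul_nonneg (by positivity)
      linarith
  · intro e _
    rw [mul_comm _ ((m : ℝ) * _), mul_assoc]
    apply mul_le_mul_of_nonneg_left _ (by positivity)
    split_ifs with h
    · rw [one_mul]
      exact avA e h (hA e h)
    · exact avB e h (hB e h)

end Fkg
section Final

set_option linter.unusedSectionVars false

variable {α : Type*} [Fintype α]

/-- an injective key refining `x` -/
noncomputable def ky {m : ℕ} (x : α → Fin m) (e : α) : ℕ :=
  (x e : ℕ) * Fintype.card α + (Fintype.equivFin α e : ℕ)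

lemma ky_lt {m : ℕ} (x : α → Fin m) {e f : α} (h : (x e : ℕ) < x f) : ky x e < ky x f := by
  unfold ky
  have h1 := (Fintype.equivFin α e).2
  have h2 : ((x e : ℕ) + 1) * Fintype.card α ≤ (x f : ℕ) * Fintype.card α :=
    Nat.mul_le_mul_right _ h
  rw [add_mul, one_mul] at h2
  omega

lemma ky_inj {m : ℕ} (x : α → Fin m) : Function.Injective (ky x) := by
  intro e f h
  rcases lt_trichotomy (x e : ℕ) (x f) with h1 | h1 | h1
  · have := ky_lt x h1; omega
  · unfold ky at h
    rw [h1] at h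
    apply (Fintype.equivFin α).injective
    apply Fin.ext
    omega
  · have := ky_lt x h1; omega

/-- reflect the coordinates in `B` -/
noncomputable def flp {m : ℕ} (B : Finset α) (g : α → Fin m) : α → Fin m :=
  fun e => if e ∈ B then Fin.rev (g e) else g e

lemma flp_flp {m : ℕ} (B : Finset α) : Function.Involutive (flp (m := m) B) := by
  intro g
  funext e
  unfold flp
  split_ifs <;> simp

lemma flp_lt {m : ℕ} (B : Finset α) (g : α → Fin m) {e f : α} (he : e ∈ B) (hf : f ∉ B)
    (h : m ≤ (g e : ℕ) + g f) : ky (flp B g) e < ky (flp B g) f := by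
  apply ky_lt
  simp only [flp, he, hf, if_true, if_false, Fin.val_rev]
  have := (g e).2
  have := (g f).2
  omega

lemma pointwise (M : Matroid α) (B : Finset α) (m : ℕ) (g : α → Fin m) :
    ∏ e, vf B (nb M B) m e g ≤
      if noEa M (ky (flp B g)) B then (2 : ℝ) ^ (ia M (ky (flp B g)) B).card else 0 := by
  split_ifs with h
  · have : (2 : ℝ) ^ (ia M (ky (flp B g)) B).card =
        ∏ e : α, (if e ∈ ia M (ky (flp B g)) B then (2 : ℝ) else 1) := by
      rw [Finset.prod_ite_mem]; simp
    rw [this]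
    apply Finset.prod_le_prod
    · intro e _; exact vf_nonneg _ _ _ _ _
    · intro e _
      unfold vf
      by_cases he : e ∈ B
      · simp only [he, if_true]
        split_ifs with h1 h2 h2
        · norm_num
        · exfalso
          apply h2
          refine Finset.mem_filter.2 ⟨he, fun f hf => ?_⟩
          have hfB : f ∉ B := by rw [mem_nb] at hf; tauto
          exact flp_lt B g he hfB (h1 f hf)
        · norm_num
        · norm_num
      · simp only [he, if_false]
        split_ifs <;> norm_num
  · unfold noEa at h
    push Not at h
    obtain ⟨e, he, hh⟩ := h
    apply le_of_eq
    apply Finset.prod_eq_zero (Finset.mem_univ e)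
    unfold vf
    rw [if_neg he, if_neg]
    rintro ⟨f, hf, h1⟩
    have hfB : f ∈ B := by rw [mem_nb] at hf; tauto
    have := flp_lt B g hfB he (by omega)
    have := hh f hf
    omega

lemma stepN (M : Matroid α) (hE : M.E = Set.univ) (K N : ℕ) (hN : 2 ≤ N)
    (hd : ∀ B ∈ bases M, ∀ e, 1 ≤ (nb M B e).card) :
    ∑ B ∈ bases M, ∏ e, (if e ∈ B then bigA K (nb M B e).card (1 / N)
      else bigB K (nb M B e).card (1 / N)) ≤ matroidTutte M 2 0 := by
  have hmpos : 0 < (K + 2) * N := by positivity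
  have hc : (0 : ℝ) < (((K + 2) * N : ℕ) : ℝ) ^ (Fintype.card α) := by positivity
  refine le_of_mul_le_mul_left ?_ hc
  rw [Finset.mul_sum]
  calc _ ≤ ∑ B ∈ bases M, ∑ g : α → Fin ((K + 2) * N), ∏ e, vf B (nb M B) ((K + 2) * N) e g := by
        apply Finset.sum_le_sum
        intro B hB
        apply grid_bound B (nb M B) K N hN _ _ (hd B hB)
        · intro e he f hf
          rw [mem_nb] at hf; tauto
        · intro e he f hf
          rw [mem_nb] at hf; tauto
    _ ≤ ∑ B ∈ bases M, ∑ g : α → Fin ((K + 2) * N),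
          (if noEa M (ky (flp B g)) B then (2 : ℝ) ^ (ia M (ky (flp B g)) B).card else 0) := by
        apply Finset.sum_le_sum
        intro B hB
        apply Finset.sum_le_sum
        intro g _
        exact pointwise M B _ g
    _ = ∑ B ∈ bases M, ∑ x : α → Fin ((K + 2) * N),
          (if noEa M (ky x) B then (2 : ℝ) ^ (ia M (ky x) B).card else 0) := by
        apply Finset.sum_congr rfl
        intro B _
        exact Equiv.sum_comp (Function.Involutive.toPerm (flp B) (flp_flp B))
          (fun x => if noEa M (ky x) B then (2 : ℝ) ^ (ia M (ky x) B).card else 0)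
    _ = ∑ x : α → Fin ((K + 2) * N), ∑ B ∈ bases M,
          (if noEa M (ky x) B then (2 : ℝ) ^ (ia M (ky x) B).card else 0) := Finset.sum_comm
    _ ≤ ∑ x : α → Fin ((K + 2) * N), matroidTutte M 2 0 := by
        apply Finset.sum_le_sum
        intro x _
        exact tutte_two_zero_ge M hE (ky x) (ky_inj x)
    _ = _ := by simp

lemma stepLim (M : Matroid α) (hE : M.E = Set.univ) (K : ℕ)
    (hd : ∀ B ∈ bases M, ∀ e, 1 ≤ (nb M B e).card) :
    ∑ B ∈ bases M, ∏ e, (if e ∈ B then bigA K (nb M B e).card 0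
      else bigB K (nb M B e).card 0) ≤ matroidTutte M 2 0 := by
  have hcont : Continuous (fun ε : ℝ => ∑ B ∈ bases M, ∏ e, (if e ∈ B then bigA K (nb M B e).card ε
      else bigB K (nb M B e).card ε)) := by
    apply continuous_finsetSum
    intro B _
    apply continuous_finsetProd
    intro e _
    split_ifs
    · unfold bigA; fun_prop
    · unfold bigB; fun_prop
  have ht := (hcont.tendsto 0).comp (tendsto_one_div_atTop_nhds_zero_nat (𝕜 := ℝ))
  refine le_of_tendsto ht ?_
  filter_upwards [Filter.eventually_ge_atTop 2] with N hN
  exact stepN M hE K N hN hd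

lemma vertex_ineq (k d : ℕ) (hk : 4 ≤ k) (h1 : k + 2 ≤ d + 1) (h2 : d + 1 ≤ k ^ 4) :
    1 ≤ bigA (k ^ 2) d 0 * bigB (k ^ 2) d 0 := by
  have hkr : (4 : ℝ) ≤ k := by exact_mod_cast hk
  have h1r : (k : ℝ) + 1 ≤ d := by
    have : k + 1 ≤ d := by omega
    exact_mod_cast this
  have h2r : (d : ℝ) + 1 ≤ (k : ℝ) ^ 4 := by exact_mod_cast h2
  by_cases hs : (k = 4 ∧ d = 5) ∨ (k = 5 ∧ d = 6)
  · rcases hs with ⟨rfl, rfl⟩ | ⟨rfl, rfl⟩ <;> norm_num [bigA, bigB]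
  have hs' : (6 : ℝ) ≤ k ∨ (k : ℝ) + 2 ≤ d := by
    by_cases h6 : 6 ≤ k
    · left; exact_mod_cast h6
    · right
      have : k + 2 ≤ d := by omega
      exact_mod_cast this
  unfold bigA bigB
  push_cast
  set P : ℝ := (k : ℝ) ^ 2 + 1 with hP
  have hP0 : 0 < P := by positivity
  have hPP : (k : ℝ) ^ 2 + 2 = P + 1 := by rw [hP]; ring
  rw [hPP]
  set D : ℝ := (d : ℝ) + 1 with hD
  have hD0 : 0 < D := by positivity
  have hbern : (P / (P + 1)) ^ d * (1 + d / P) ≤ 1 := by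
    have hp : 0 ≤ 1 / P := by positivity
    have hb := one_add_mul_le_pow (a := 1 / P) (by linarith) d
    have e1 : (P / (P + 1)) ^ d * (1 + 1 / P) ^ d = 1 := by
      rw [← mul_pow]
      have : P / (P + 1) * (1 + 1 / P) = 1 := by field_simp
      rw [this, one_pow]
    refine le_trans ?_ e1.le
    apply mul_le_mul_of_nonneg_left _ (by positivity)
    calc 1 + (d : ℝ) / P = 1 + d * (1 / P) := by ring
      _ ≤ _ := hb
  have hq : (P / (P + 1)) ^ d ≤ P / (P + D - 1) := by
    have e : P + D - 1 = P + d := by rw [hD]; ring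
    rw [e, le_div_iff₀ (by positivity)]
    have : (P / (P + 1)) ^ d * (P + d) = P * ((P / (P + 1)) ^ d * (1 + d / P)) := by
      field_simp
    rw [this]; nlinarith
  have hDge : (5 : ℝ) ≤ D := by rw [hD]; linarith
  have hPD : 0 < P + D - 1 := by linarith
  have hpoly : 0 ≤ D * (D * (P ^ 2 - P + 1) - D ^ 2 - 3 * P ^ 2) - P ^ 3 := by
    have gen : ∀ a : ℝ, 0 < a → a ≤ D → a ≤ P →
        0 ≤ a * (a * (P ^ 2 - P + 1) - a ^ 2 - 3 * P ^ 2) - P ^ 3 →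
        0 ≤ D * (D * (P ^ 2 - P + 1) - D ^ 2 - 3 * P ^ 2) - P ^ 3 := by
      intro a ha haD haP hfa
      have hb : D ≤ (P - 1) ^ 2 := by rw [hP]; nlinarith
      have hG : a * (P ^ 2 - P + 1) - a ^ 2 ≤ D * (P ^ 2 - P + 1) - D ^ 2 := by
        nlinarith [mul_nonneg (sub_nonneg.2 haD) (sub_nonneg.2 hb),
          mul_nonneg (sub_nonneg.2 haD) (sub_nonneg.2 haP)]
      have hG0 : 0 ≤ a * (P ^ 2 - P + 1) - a ^ 2 - 3 * P ^ 2 := by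
        by_contra hneg
        push Not at hneg
        have h3 : 0 < P ^ 3 := by positivity
        have := mul_neg_of_pos_of_neg ha hneg
        linarith
      have h4 : a * (a * (P ^ 2 - P + 1) - a ^ 2 - 3 * P ^ 2) ≤
          D * (D * (P ^ 2 - P + 1) - D ^ 2 - 3 * P ^ 2) :=
        mul_le_mul haD (by linarith) hG0 hD0.le
      linarith
    rcases hs' with h6 | h6
    · refine gen (k + 2) (by positivity) (by rw [hD]; linarith) (by rw [hP]; nlinarith) ?_
      rw [hP]
      obtain ⟨t, ht, ht'⟩ : ∃ t : ℝ, 0 ≤ t ∧ (k : ℝ) = t + 6 := ⟨k - 6, by linarith, by ring⟩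
      rw [ht']
      ring_nf
      positivity
    · refine gen (k + 3) (by positivity) (by rw [hD]; linarith) (by rw [hP]; nlinarith) ?_
      rw [hP]
      obtain ⟨t, ht, ht'⟩ : ∃ t : ℝ, 0 ≤ t ∧ (k : ℝ) = t + 4 := ⟨k - 4, by linarith, by ring⟩
      rw [ht']
      ring_nf
      positivity
  have hmain : 1 ≤ (1 + 1 / (P + 1) + P / (P + 1) / D - 0) *
      (P / (P + 1) * (1 - P / (P + D - 1) * (1 / D + 0))) := by
    have : (1 + 1 / (P + 1) + P / (P + 1) / D - 0) *
      (P / (P + 1) * (1 - P / (P + D - 1) * (1 / D + 0))) - 1 =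
      (D * (D * (P ^ 2 - P + 1) - D ^ 2 - 3 * P ^ 2) - P ^ 3) / ((P + 1) ^ 2 * D ^ 2 * (P + D - 1)) := by
      field_simp
      ring
    have h0 : 0 ≤ (D * (D * (P ^ 2 - P + 1) - D ^ 2 - 3 * P ^ 2) - P ^ 3) /
        ((P + 1) ^ 2 * D ^ 2 * (P + D - 1)) := div_nonneg hpoly (by positivity)
    linarith
  refine hmain.trans ?_
  rw [sub_zero]
  gcongr

lemma circ_of (M : Matroid α) {C : Set α} (h : M.IsCircuit C) : IsMatroidCircuit M C := by
  rw [Matroid.isCircuit_iff_forall_ssubset] at h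
  exact ⟨h.1, fun D hD => h.2 hD⟩

lemma deg_of_notMem (M : Matroid α) (hE : M.E = Set.univ) (a b : ℕ)
    (hC : ∀ C : Set α, IsMatroidCircuit M C → a ≤ C.ncard ∧ C.ncard ≤ b)
    (B : Finset α) (hB : M.IsBase (B : Set α)) (e : α) (he : e ∉ B) :
    a ≤ (nb M B e).card + 1 ∧ (nb M B e).card + 1 ≤ b := by
  have h := hC _ (circ_of M (nb_circuit M hE B hB e he))
  have hn : e ∉ nb M B e := by rw [mem_nb]; tauto
  rwa [← Finset.coe_insert, Set.ncard_coe_finset, Finset.card_insert_of_notMem hn] at h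

lemma dual_base (M : Matroid α) (hE : M.E = Set.univ) (B : Finset α) :
    M✶.IsBase ((Bᶜ : Finset α) : Set α) ↔ M.IsBase (B : Set α) := by
  rw [Matroid.dual_isBase_iff (by simp [hE]), hE]
  have : Set.univ \ ((Bᶜ : Finset α) : Set α) = (B : Set α) := by ext; simp
  rw [this]

lemma deg_all (M : Matroid α) (hE : M.E = Set.univ) (a b : ℕ)
    (hC : ∀ C : Set α, IsMatroidCircuit M C → a ≤ C.ncard ∧ C.ncard ≤ b)
    (hC' : ∀ C : Set α, IsMatroidCircuit M✶ C → a ≤ C.ncard ∧ C.ncard ≤ b)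
    (B : Finset α) (hB : M.IsBase (B : Set α)) (e : α) :
    a ≤ (nb M B e).card + 1 ∧ (nb M B e).card + 1 ≤ b := by
  by_cases he : e ∈ B
  · rw [← nb_dual M hE]
    exact deg_of_notMem M✶ (by simpa using hE) a b hC' Bᶜ ((dual_base M hE B).2 hB) e (by simpa using he)
  · exact deg_of_notMem M hE a b hC B hB e he

end Final

/-- If every circuit of `M` and of its dual `M✶` has cardinality between `ℓ` and `(ℓ-2)^4`
for some `ℓ ≥ 6`, then `T_M(2,0) · T_M(0,2) ≥ T_M(1,1)²`. -/
theorem matroidTutte_merino_welsh_of_circuit_lengths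
    {α : Type*} [Fintype α] (M : Matroid α) (hE : M.E = Set.univ)
    (ℓ : ℕ) (hℓ : 6 ≤ ℓ)
    (hC : ∀ C : Set α, IsMatroidCircuit M C → ℓ ≤ C.ncard ∧ C.ncard ≤ (ℓ - 2) ^ 4)
    (hC' : ∀ C : Set α, IsMatroidCircuit M✶ C → ℓ ≤ C.ncard ∧ C.ncard ≤ (ℓ - 2) ^ 4) :
    matroidTutte M 2 0 * matroidTutte M 0 2 ≥ matroidTutte M 1 1 ^ 2 := by
  have hE' : M✶.E = Set.univ := by simpa using hE
  have hdeg := deg_all M hE ℓ _ hC hC'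
  have hb : ∀ B, B ∈ bases M ↔ M.IsBase (B : Set α) := by intro B; simp [bases]
  have hb' : ∀ B, B ∈ bases M✶ ↔ Bᶜ ∈ bases M := by
    intro B
    rw [hb, ← dual_base M hE, compl_compl]
    simp [bases]
  have hd : ∀ B ∈ bases M, ∀ e, 1 ≤ (nb M B e).card := by
    intro B hB e
    have := hdeg B ((hb B).1 hB) e
    omega
  have hd' : ∀ B ∈ bases M✶, ∀ e, 1 ≤ (nb M✶ B e).card := by
    intro B hB e
    have h1 := hd Bᶜ ((hb' B).1 hB) e
    rwa [← nb_dual M hE, compl_compl] at h1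
  have s1 := stepLim M hE ((ℓ - 2) ^ 2) hd
  have s2 := stepLim M✶ hE' ((ℓ - 2) ^ 2) hd'
  rw [tutte_dual M hE] at s2
  set K := (ℓ - 2) ^ 2 with hK
  have s2' : ∑ B ∈ bases M, ∏ e, (if e ∈ B then bigB K (nb M B e).card 0
      else bigA K (nb M B e).card 0) ≤ matroidTutte M 0 2 := by
    refine le_trans (le_of_eq ?_) s2
    refine Finset.sum_bij (fun B _ => Bᶜ) ?_ ?_ ?_ ?_
    · intro B hB; rw [hb', compl_compl]; exact hB
    · intro B _ B' _ h; exact compl_injective h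
    · intro B hB; exact ⟨Bᶜ, (hb' B).1 hB, compl_compl B⟩
    · intro B hB
      apply Finset.prod_congr rfl
      intro e _
      rw [nb_dual M hE]
      by_cases he : e ∈ B <;> simp [he]
  have hv : ∀ B ∈ bases M, ∀ e, 1 ≤ bigA K (nb M B e).card 0 * bigB K (nb M B e).card 0 := by
    intro B hB e
    have := hdeg B ((hb B).1 hB) e
    exact vertex_ineq (ℓ - 2) _ (by omega) (by omega) this.2
  have hA0 : ∀ d, 0 ≤ bigA K d 0 := by
    intro d; unfold bigA; rw [sub_zero]; positivity
  have hB0 : ∀ B ∈ bases M, ∀ e, 0 ≤ bigB K (nb M B e).card 0 := by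
    intro B hB e
    by_contra hneg
    push Not at hneg
    have := hv B hB e
    have := mul_nonpos_of_nonneg_of_nonpos (hA0 (nb M B e).card) hneg.le
    linarith
  have hu0 : ∀ B ∈ bases M, 0 ≤ ∏ e, (if e ∈ B then bigA K (nb M B e).card 0
      else bigB K (nb M B e).card 0) := by
    intro B hB
    apply Finset.prod_nonneg
    intro e _
    split_ifs
    · exact hA0 _
    · exact hB0 B hB e
  have hw0 : ∀ B ∈ bases M, 0 ≤ ∏ e, (if e ∈ B then bigB K (nb M B e).card 0
      else bigA K (nb M B e).card 0) := by
    intro B hB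
    apply Finset.prod_nonneg
    intro e _
    split_ifs
    · exact hB0 B hB e
    · exact hA0 _
  have cs := Finset.sum_sq_le_sum_mul_sum_of_sq_le_mul (bases M) (r := fun _ => (1 : ℝ)) hu0 hw0
    (by
      intro B hB
      rw [← Finset.prod_mul_distrib, one_pow]
      have : (1 : ℝ) = ∏ e : α, 1 := by simp
      rw [this]
      apply Finset.prod_le_prod
      · intros; norm_num
      · intro e _
        split_ifs
        · exact hv B hB e
        · rw [mul_comm]; exact hv B hB e)
  rw [tutte_one_one]
  have hc : (∑ i ∈ bases M, (1 : ℝ)) = (bases M).card := by simp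
  rw [hc] at cs
  refine le_trans cs ?_
  exact mul_le_mul s1 s2' (Finset.sum_nonneg hw0) (le_trans (Finset.sum_nonneg hu0) s1)
end

section
/- Let H = (A, B, E) be a finite bipartite graph and let d_v denote the degree of a vertex v. Suppose that either 0 ≤ x ≤ 1 and y ≥ 1, or 0 ≤ y ≤ 1 and x ≥ 1. Then T̃_H(x,y) ≥ Π_{i ∈ A} (1 + (x−1)/(d_i+1)) · Π_{j ∈ B} (1 + (y−1)/(d_j+1)). -/
open scoped Classical

/-- The permutation Tutte polynomial of a bipartite graph `G` on finite vertex set `V`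
with bipartition class `A` (the other class being `Aᶜ`). -/
noncomputable def permTutte {V : Type*} [Fintype V] [DecidableEq V]
    (G : SimpleGraph V) (A : Set V) (x y : ℝ) : ℝ :=
  ((Fintype.card V).factorial : ℝ)⁻¹ *
    ∑ π : V ≃ Fin (Fintype.card V),
      x ^ Nat.card {i : V // i ∈ A ∧ ∀ j, G.Adj i j → π j < π i} *
      y ^ Nat.card {j : V // j ∉ A ∧ ∀ i, G.Adj j i → π i < π j}

/-- `G` is bipartite with parts `A` and `Aᶜ`. -/
def IsBipartition {V : Type*} (G : SimpleGraph V) (A : Set V) : Prop :=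
  ∀ u v, G.Adj u v → (u ∈ A ↔ v ∉ A)

/-- Weighted activity factor of a vertex. -/
noncomputable def ptg {V : Type*} (G : SimpleGraph V) (c : V → ℝ) (v : V) (a : V → ℕ) : ℝ :=
  if ∀ j, G.Adj v j → a j < a v then c v else 1

lemma ptg_nonneg {V : Type*} (G : SimpleGraph V) (c : V → ℝ) (hc : ∀ v, 0 ≤ c v) (v : V)
    (a : V → ℕ) : 0 ≤ ptg G c v a := by
  unfold ptg; split_ifs
  · exact hc v
  · exact zero_le_one

lemma ptg_congr {V : Type*} (G : SimpleGraph V) (c : V → ℝ) (v : V)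
    (a b : V → ℕ) (h : ∀ u w, a u < a w ↔ b u < b w) : ptg G c v a = ptg G c v b := by
  unfold ptg; simp only [h]

lemma fkg_prod {α ι : Type*} [DistribLattice α] [Fintype α] [Nonempty α] (s : Finset ι)
    (f : ι → α → ℝ) (h0 : ∀ i a, 0 ≤ f i a) (hm : ∀ i, Monotone (f i)) :
    ∏ i ∈ s, ((Fintype.card α : ℝ)⁻¹ * ∑ a, f i a) ≤
      (Fintype.card α : ℝ)⁻¹ * ∑ a, ∏ i ∈ s, f i a := by
  have hcard : (0 : ℝ) < Fintype.card α := by exact_mod_cast Fintype.card_pos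
  induction s using Finset.induction_on with
  | empty => simp [hcard.ne']
  | insert i s hi ih =>
    simp only [Finset.prod_insert hi]
    have hs0 : ∀ a, 0 ≤ ∏ j ∈ s, f j a := fun a => Finset.prod_nonneg fun j _ => h0 j a
    have hsm : Monotone fun a => ∏ j ∈ s, f j a := fun a b hab =>
      Finset.prod_le_prod (fun j _ => h0 j a) (fun j _ => hm j hab)
    have key := fkg (α := α) (β := ℝ) (f := f i) (g := fun a => ∏ j ∈ s, f j a) (μ := fun _ => 1)
      (fun _ => zero_le_one) (h0 i) hs0 (hm i) hsm (by simp)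
    simp only [one_mul, Finset.sum_const, Finset.card_univ, nsmul_eq_mul, mul_one] at key
    calc _ ≤ ((Fintype.card α : ℝ)⁻¹ * ∑ a, f i a) *
          ((Fintype.card α : ℝ)⁻¹ * ∑ a, ∏ j ∈ s, f j a) := by
            apply mul_le_mul_of_nonneg_left ih
            exact mul_nonneg (inv_nonneg.2 hcard.le) (Finset.sum_nonneg fun a _ => h0 i a)
      _ = ((Fintype.card α : ℝ)⁻¹ * (Fintype.card α : ℝ)⁻¹) *
          ((∑ a, f i a) * ∑ a, ∏ j ∈ s, f j a) := by ring
      _ ≤ ((Fintype.card α : ℝ)⁻¹ * (Fintype.card α : ℝ)⁻¹) *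
          ((Fintype.card α : ℝ) * ∑ a, f i a * ∏ j ∈ s, f j a) := by
            apply mul_le_mul_of_nonneg_left key
            positivity
      _ = _ := by field_simp

/-- Coordinate reversal on `S`. -/
noncomputable def ptrev {V : Type*} (S : Set V) (N : ℕ) : (V → Fin N) ≃ (V → Fin N) :=
  Equiv.piCongrRight fun v => if v ∈ S then Fin.revPerm else Equiv.refl _

lemma ptrev_mem {V : Type*} (S : Set V) (N : ℕ) (a : V → Fin N) (v : V) (h : v ∈ S) :
    ptrev S N a v = Fin.rev (a v) := by
  simp [ptrev, h]

lemma ptrev_not_mem {V : Type*} (S : Set V) (N : ℕ) (a : V → Fin N) (v : V) (h : v ∉ S) :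
    ptrev S N a v = a v := by
  simp [ptrev, h]

lemma ptg_mono {V : Type*} (G : SimpleGraph V) (S : Set V)
    (hb : IsBipartition G S) (c : V → ℝ)
    (h1 : ∀ v ∈ S, c v ≤ 1) (h2 : ∀ v, v ∉ S → 1 ≤ c v) (N : ℕ) (v : V) :
    Monotone fun a : V → Fin N => ptg G c v (fun u => (ptrev S N a u : ℕ)) := by
  intro a b hab
  have hab' : ∀ u, (a u : ℕ) ≤ b u := fun u => hab u
  simp only [ptg]
  by_cases hv : v ∈ S
  · have himp : (∀ j, G.Adj v j → (ptrev S N b j : ℕ) < ptrev S N b v) →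
        (∀ j, G.Adj v j → (ptrev S N a j : ℕ) < ptrev S N a v) := by
      intro h j hj
      have := h j hj
      have hjS := (hb v j hj).1 hv
      rw [ptrev_mem _ _ _ _ hv, ptrev_not_mem _ _ _ _ hjS, Fin.val_rev] at this ⊢
      have := hab' v; have := hab' j
      omega
    have := h1 v hv
    split_ifs with p q q
    · exact le_rfl
    · exact this
    · exact absurd (himp q) p
    · exact le_rfl
  · have himp : (∀ j, G.Adj v j → (ptrev S N a j : ℕ) < ptrev S N a v) →
        (∀ j, G.Adj v j → (ptrev S N b j : ℕ) < ptrev S N b v) := by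
      intro h j hj
      have := h j hj
      have hjS : j ∈ S := by
        by_contra hj'; exact hv ((hb v j hj).2 hj')
      rw [ptrev_not_mem _ _ _ _ hv, ptrev_mem _ _ _ _ hjS, Fin.val_rev] at this ⊢
      have := hab' v; have := hab' j
      omega
    have := h2 v hv
    split_ifs with p q q
    · exact le_rfl
    · exact absurd (himp p) q
    · exact this
    · exact le_rfl

/-- average over all maps to `Fin N` -/
noncomputable def ptavg {V : Type*} [Fintype V] [DecidableEq V] (N : ℕ) (g : (V → ℕ) → ℝ) : ℝ :=
  ((N : ℝ) ^ Fintype.card V)⁻¹ * ∑ a : V → Fin N, g (fun u => (a u : ℕ))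

lemma ptavg_ineq {V : Type*} [Fintype V] [DecidableEq V] (G : SimpleGraph V) (S : Set V)
    (hb : IsBipartition G S) (c : V → ℝ) (hc : ∀ v, 0 ≤ c v)
    (h1 : ∀ v ∈ S, c v ≤ 1) (h2 : ∀ v, v ∉ S → 1 ≤ c v) (N : ℕ) (hN : 0 < N) :
    ∏ v, ptavg N (ptg G c v) ≤ ptavg N (fun a => ∏ v, ptg G c v a) := by
  haveI : NeZero N := ⟨hN.ne'⟩
  have key := fkg_prod (α := V → Fin N) (Finset.univ : Finset V)
    (fun v a => ptg G c v (fun u => (ptrev S N a u : ℕ)))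
    (fun v a => ptg_nonneg G c hc v _) (ptg_mono G S hb c h1 h2 N)
  have e : ∀ g : (V → ℕ) → ℝ, ∑ a : V → Fin N, g (fun u => (ptrev S N a u : ℕ)) =
      ∑ a : V → Fin N, g (fun u => (a u : ℕ)) := fun g =>
    Equiv.sum_comp (ptrev S N) (fun a => g (fun u => (a u : ℕ)))
  have e2 := e (fun a => ∏ v, ptg G c v a)
  simp only [e, e2] at key
  simpa [ptavg, Fintype.card_pi] using key

/-- average over permutations -/
noncomputable def pavg {V : Type*} [Fintype V] [DecidableEq V] (g : (V → ℕ) → ℝ) : ℝ :=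
  ((Fintype.card V).factorial : ℝ)⁻¹ * ∑ π : V ≃ Fin (Fintype.card V), g (fun u => (π u : ℕ))

lemma exists_rank {V : Type*} [Fintype V] (a : V → ℕ) (ha : Function.Injective a) :
    ∃ π : V ≃ Fin (Fintype.card V), ∀ u w, a u < a w ↔ π u < π w := by
  letI : LinearOrder V := LinearOrder.lift' a ha
  refine ⟨(Fintype.orderIsoFinOfCardEq V rfl).symm.toEquiv, fun u w => ?_⟩
  exact ((Fintype.orderIsoFinOfCardEq V rfl).symm.lt_iff_lt (x := u) (y := w)).symm

lemma sum_inj {V : Type*} [Fintype V] [DecidableEq V] (g : (V → ℕ) → ℝ)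
    (hg : ∀ a b : V → ℕ, (∀ u w, a u < a w ↔ b u < b w) → g a = g b) (N : ℕ) :
    ∑ a : V ↪ Fin N, g (fun u => (a u : ℕ)) = (N.descFactorial (Fintype.card V) : ℝ) * pavg g := by
  have hf : ((Fintype.card V).factorial : ℝ) ≠ 0 := by positivity
  have h1 : ∀ σ : Equiv.Perm V, ∑ a : V ↪ Fin N, g (fun u => (a u : ℕ)) =
      ∑ a : V ↪ Fin N, g (fun u => (a (σ u) : ℕ)) := by
    intro σ
    refine (Equiv.sum_comp (Equiv.embeddingCongr σ.symm (Equiv.refl (Fin N)))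
      (fun a : V ↪ Fin N => g (fun u => (a u : ℕ)))).symm.trans ?_
    rfl
  have h2 : ∀ a : V ↪ Fin N, ∑ σ : Equiv.Perm V, g (fun u => (a (σ u) : ℕ)) =
      ∑ π : V ≃ Fin (Fintype.card V), g (fun u => (π u : ℕ)) := by
    intro a
    obtain ⟨π, hπ⟩ := exists_rank (fun u => (a u : ℕ))
      (fun u w h => a.injective (Fin.ext h))
    rw [← Equiv.sum_comp (Equiv.equivCongr (Equiv.refl V) π)]
    refine Finset.sum_congr rfl fun σ _ => hg _ _ fun u w => ?_
    exact hπ (σ u) (σ w)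
  have h3 : ((Fintype.card V).factorial : ℝ) * ∑ a : V ↪ Fin N, g (fun u => (a u : ℕ)) =
      (N.descFactorial (Fintype.card V) : ℝ) *
        ∑ π : V ≃ Fin (Fintype.card V), g (fun u => (π u : ℕ)) := by
    calc _ = ∑ σ : Equiv.Perm V, ∑ a : V ↪ Fin N, g (fun u => (a (σ u) : ℕ)) := by
            rw [← Finset.sum_congr rfl (fun σ _ => h1 σ)]
            simp [Fintype.card_perm]
      _ = _ := by
            rw [Finset.sum_comm, Finset.sum_congr rfl (fun a _ => h2 a)]
            simp [Fintype.card_embedding_eq]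
  unfold pavg
  field_simp
  linarith

lemma ptavg_close {V : Type*} [Fintype V] [DecidableEq V] (g : (V → ℕ) → ℝ)
    (hg : ∀ a b : V → ℕ, (∀ u w, a u < a w ↔ b u < b w) → g a = g b) (C : ℝ)
    (hC : ∀ a, |g a| ≤ C) (N : ℕ) (hN : 0 < N) :
    |ptavg N g - (N.descFactorial (Fintype.card V) : ℝ) / (N : ℝ) ^ Fintype.card V * pavg g| ≤
      C * (1 - (N.descFactorial (Fintype.card V) : ℝ) / (N : ℝ) ^ Fintype.card V) := by
  have hp : (0 : ℝ) < (N : ℝ) ^ Fintype.card V := by positivity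
  set P : Finset (V → Fin N) := Finset.univ.filter Function.Injective
  have hs : ∀ f : (V → Fin N) → ℝ, ∑ a ∈ P, f a = ∑ a : V ↪ Fin N, f a := by
    intro f
    rw [← Equiv.sum_comp (Equiv.subtypeInjectiveEquivEmbedding V (Fin N))]
    exact (Finset.sum_subtype P (by simp [P]) f)
  have hsplit := Finset.sum_filter_add_sum_filter_not (Finset.univ : Finset (V → Fin N))
    Function.Injective (fun a => g (fun u => (a u : ℕ)))
  have hsplit1 := Finset.sum_filter_add_sum_filter_not (Finset.univ : Finset (V → Fin N))
    Function.Injective (fun _ => (1 : ℝ))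
  have i1 := hs (fun a => g (fun u => (a u : ℕ)))
  have i2 := hs (fun _ => 1)
  rw [sum_inj g hg N] at i1
  simp only [P] at i1 i2
  rw [i1] at hsplit
  rw [i2] at hsplit1
  set R : Finset (V → Fin N) := Finset.univ.filter (fun a => ¬ Function.Injective a)
  have hR : |∑ a ∈ R, g (fun u => (a u : ℕ))| ≤ C * ∑ a ∈ R, (1 : ℝ) := by
    refine (Finset.abs_sum_le_sum_abs _ _).trans ?_
    rw [Finset.mul_sum]
    exact Finset.sum_le_sum fun a _ => by simpa using hC _
  have hcard : ∑ a ∈ R, (1 : ℝ) = (N : ℝ) ^ Fintype.card V - N.descFactorial (Fintype.card V) := by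
    simp [Fintype.card_embedding_eq, Fintype.card_pi] at hsplit1 ⊢
    linarith
  rw [hcard] at hR
  have e1 : ptavg N g - (N.descFactorial (Fintype.card V) : ℝ) / (N : ℝ) ^ Fintype.card V * pavg g
      = ((N : ℝ) ^ Fintype.card V)⁻¹ * ∑ a ∈ R, g (fun u => (a u : ℕ)) := by
    unfold ptavg
    rw [← hsplit]
    field_simp
    ring
  rw [e1, abs_mul, abs_of_pos (inv_pos.2 hp)]
  calc _ ≤ ((N : ℝ) ^ Fintype.card V)⁻¹ *
        (C * ((N : ℝ) ^ Fintype.card V - N.descFactorial (Fintype.card V))) :=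
        mul_le_mul_of_nonneg_left hR (inv_pos.2 hp).le
    _ = _ := by field_simp

lemma desc_tendsto (m : ℕ) : Filter.Tendsto
    (fun N : ℕ => (N.descFactorial m : ℝ) / (N : ℝ) ^ m) Filter.atTop (nhds 1) := by
  induction m with
  | zero => simp
  | succ m ih =>
    have h : Filter.Tendsto (fun N : ℕ => 1 - (m : ℝ) / (N : ℝ)) Filter.atTop (nhds (1 - 0)) :=
      tendsto_const_nhds.sub (tendsto_const_div_atTop_nhds_zero_nat (m : ℝ))
    have := h.mul ih
    simp only [sub_zero, mul_one] at this
    refine this.congr' ?_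
    filter_upwards [Filter.eventually_ge_atTop (m + 1)] with N hN
    have : (0 : ℝ) < N := by exact_mod_cast (by omega : 0 < N)
    rw [Nat.descFactorial_succ, Nat.cast_mul, Nat.cast_sub (by omega)]
    field_simp
    ring

lemma ptavg_tendsto {V : Type*} [Fintype V] [DecidableEq V] (g : (V → ℕ) → ℝ)
    (hg : ∀ a b : V → ℕ, (∀ u w, a u < a w ↔ b u < b w) → g a = g b) (C : ℝ)
    (hC : ∀ a, |g a| ≤ C) : Filter.Tendsto (fun N => ptavg N g) Filter.atTop (nhds (pavg g)) := by
  have hd := desc_tendsto (Fintype.card V)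
  have h0 : Filter.Tendsto (fun N : ℕ => ptavg N g -
      (N.descFactorial (Fintype.card V) : ℝ) / (N : ℝ) ^ Fintype.card V * pavg g)
      Filter.atTop (nhds 0) := by
    refine squeeze_zero_norm' (a := fun N : ℕ => C * (1 -
      (N.descFactorial (Fintype.card V) : ℝ) / (N : ℝ) ^ Fintype.card V)) ?_ ?_
    · filter_upwards [Filter.eventually_gt_atTop 0] with N hN
      exact ptavg_close g hg C hC N hN
    · simpa using (tendsto_const_nhds (x := C)).mul ((tendsto_const_nhds (x := (1 : ℝ))).sub hd)
  simpa using h0.add (hd.mul_const (pavg g))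

lemma pavg_ineq {V : Type*} [Fintype V] [DecidableEq V] (G : SimpleGraph V) (S : Set V)
    (hb : IsBipartition G S) (c : V → ℝ) (hc : ∀ v, 0 ≤ c v)
    (h1 : ∀ v ∈ S, c v ≤ 1) (h2 : ∀ v, v ∉ S → 1 ≤ c v) :
    ∏ v, pavg (ptg G c v) ≤ pavg (fun a => ∏ v, ptg G c v a) := by
  have hB : ∀ v a, |ptg G c v a| ≤ max (c v) 1 := by
    intro v a
    rw [abs_of_nonneg (ptg_nonneg G c hc v a)]
    unfold ptg; split_ifs <;> simp
  have t1 : Filter.Tendsto (fun N => ∏ v, ptavg N (ptg G c v)) Filter.atTop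
      (nhds (∏ v, pavg (ptg G c v))) :=
    tendsto_finsetProd _ fun v _ => ptavg_tendsto _ (ptg_congr G c v) _ (hB v)
  have t2 : Filter.Tendsto (fun N => ptavg N (fun a => ∏ v, ptg G c v a)) Filter.atTop
      (nhds (pavg (fun a => ∏ v, ptg G c v a))) := by
    refine ptavg_tendsto _ (fun a b h => ?_) (∏ v, max (c v) 1) (fun a => ?_)
    · exact Finset.prod_congr rfl fun v _ => ptg_congr G c v a b h
    · rw [Finset.abs_prod]
      exact Finset.prod_le_prod (fun _ _ => abs_nonneg _) fun v _ => hB v a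
  refine le_of_tendsto_of_tendsto t1 t2 ?_
  filter_upwards [Filter.eventually_gt_atTop 0] with N hN
  exact ptavg_ineq G S hb c hc h1 h2 N hN

lemma count_max {V : Type*} [Fintype V] [DecidableEq V] (K : Finset V) (v : V) (hv : v ∈ K) :
    K.card * (Finset.univ.filter
      (fun π : V ≃ Fin (Fintype.card V) => ∀ w ∈ K, π w ≤ π v)).card =
      (Fintype.card V).factorial := by
  have h1 : ∀ u ∈ K, (Finset.univ.filter
      (fun π : V ≃ Fin (Fintype.card V) => ∀ w ∈ K, π w ≤ π u)).card = (Finset.univ.filter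
      (fun π : V ≃ Fin (Fintype.card V) => ∀ w ∈ K, π w ≤ π v)).card := by
    intro u hu
    refine Finset.card_equiv (Equiv.equivCongr (Equiv.swap u v) (Equiv.refl _)) fun π => ?_
    simp only [Finset.mem_filter, Finset.mem_univ, true_and, Equiv.equivCongr_apply_apply,
      Equiv.refl_apply, Equiv.symm_swap, Equiv.swap_apply_right]
    have hK : ∀ w ∈ K, Equiv.swap u v w ∈ K := by
      intro w hw
      rw [Equiv.swap_apply_def]; split_ifs <;> assumption
    constructor
    · intro h w hw
      exact h _ (hK w hw)
    · intro h w hw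
      simpa using h _ (hK w hw)
  have h2 : (Finset.univ : Finset (V ≃ Fin (Fintype.card V))) = K.biUnion fun u =>
      Finset.univ.filter (fun π : V ≃ Fin (Fintype.card V) => ∀ w ∈ K, π w ≤ π u) := by
    ext π
    simp only [Finset.mem_univ, Finset.mem_biUnion, Finset.mem_filter, true_and, true_iff]
    obtain ⟨u, hu, h⟩ := K.exists_max_image π ⟨v, hv⟩
    exact ⟨u, hu, h⟩
  have h3 : (Finset.univ : Finset (V ≃ Fin (Fintype.card V))).card =
      (Fintype.card V).factorial := by
    rw [Finset.card_univ, Fintype.card_equiv (Fintype.equivFin V)]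
  rw [← h3, congrArg Finset.card h2, Finset.card_biUnion, Finset.sum_congr rfl h1, Finset.sum_const,
    smul_eq_mul]
  intro u hu w hw huw
  rw [Function.onFun, Finset.disjoint_left]
  intro π hπ hπ'
  simp only [Finset.mem_filter, Finset.mem_univ, true_and] at hπ hπ'
  exact huw (π.injective (le_antisymm (hπ' u hu) (hπ w hw)))

lemma pavg_ptg {V : Type*} [Fintype V] [DecidableEq V] (G : SimpleGraph V) [DecidableRel G.Adj]
    (c : V → ℝ) (v : V) : pavg (ptg G c v) = 1 + (c v - 1) / ((G.degree v : ℝ) + 1) := by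
  have hcount := count_max (insert v (G.neighborFinset v)) v (by simp)
  rw [Finset.card_insert_of_notMem (by simp), SimpleGraph.card_neighborFinset_eq_degree] at hcount
  set F := Finset.univ.filter (fun π : V ≃ Fin (Fintype.card V) =>
    ∀ w ∈ insert v (G.neighborFinset v), π w ≤ π v) with hF
  have hf : ((Fintype.card V).factorial : ℝ) ≠ 0 := by positivity
  have hsum : ∑ π : V ≃ Fin (Fintype.card V), ptg G c v (fun u => (π u : ℕ)) =
      (Fintype.card V).factorial + (c v - 1) * F.card := by
    have : ∀ π : V ≃ Fin (Fintype.card V), ptg G c v (fun u => (π u : ℕ)) =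
        1 + (c v - 1) * (if π ∈ F then 1 else 0) := by
      intro π
      have : (∀ j, G.Adj v j → (π j : ℕ) < π v) ↔ π ∈ F := by
        simp only [hF, Finset.mem_filter, Finset.mem_univ, true_and, Finset.mem_insert,
          SimpleGraph.mem_neighborFinset, Fin.val_fin_lt]
        constructor
        · rintro h w (rfl | hw)
          · exact le_rfl
          · exact (h w hw).le
        · intro h j hj
          refine lt_of_le_of_ne (h j (Or.inr hj)) fun e => ?_
          exact hj.ne (π.injective e).symm
      simp only [ptg, this]
      split_ifs <;> ring
    rw [Finset.sum_congr rfl fun π _ => this π, Finset.sum_add_distrib, ← Finset.mul_sum]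
    simp [Fintype.card_equiv (Fintype.equivFin V)]
  have hc : ((G.degree v : ℝ) + 1) * F.card = (Fintype.card V).factorial := by
    exact_mod_cast hcount
  have hd : ((G.degree v : ℝ) + 1) ≠ 0 := by positivity
  unfold pavg
  rw [hsum]
  field_simp
  rw [← hc]
  ring

lemma permTutte_eq {V : Type*} [Fintype V] [DecidableEq V]
    (G : SimpleGraph V) (A : Set V) (x y : ℝ) :
    permTutte G A x y = pavg (fun a => ∏ v, ptg G (fun v => if v ∈ A then x else y) v a) := by
  unfold permTutte pavg
  congr 1
  refine Finset.sum_congr rfl fun π _ => ?_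
  beta_reduce
  rw [← Finset.prod_filter_mul_prod_filter_not Finset.univ (fun v => v ∈ A)]
  congr 1
  · rw [Finset.prod_congr rfl (g := fun v => if ∀ j, G.Adj v j → π j < π v then x else 1)]
    · rw [Finset.prod_ite, Finset.prod_const, Finset.prod_const_one, mul_one, Finset.filter_filter,
        Nat.card_eq_fintype_card, Fintype.card_subtype]
    · intro v hv
      simp only [Finset.mem_filter, Finset.mem_univ, true_and] at hv
      simp [ptg, hv]
  · rw [Finset.prod_congr rfl (g := fun v => if ∀ j, G.Adj v j → π j < π v then y else 1)]
    · rw [Finset.prod_ite, Finset.prod_const, Finset.prod_const_one, mul_one, Finset.filter_filter,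
        Nat.card_eq_fintype_card, Fintype.card_subtype]
    · intro v hv
      simp only [Finset.mem_filter, Finset.mem_univ, true_and] at hv
      simp [ptg, hv]

/-- For a finite bipartite graph `H = (A, B, E)` and `0 ≤ x ≤ 1, y ≥ 1` or `0 ≤ y ≤ 1, x ≥ 1`,
`T̃_H(x,y) ≥ Π_{i∈A} (1+(x−1)/(d_i+1)) · Π_{j∈B} (1+(y−1)/(d_j+1))`. -/
theorem permTutte_ge_prod_degrees
    {V : Type*} [Fintype V] [DecidableEq V] (G : SimpleGraph V) [DecidableRel G.Adj]
    (A : Set V) (hbip : IsBipartition G A) (x y : ℝ)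
    (hxy : (0 ≤ x ∧ x ≤ 1 ∧ 1 ≤ y) ∨ (0 ≤ y ∧ y ≤ 1 ∧ 1 ≤ x)) :
    permTutte G A x y ≥
      (∏ i ∈ Finset.univ.filter (· ∈ A), (1 + (x - 1) / ((G.degree i : ℝ) + 1))) *
      ∏ j ∈ Finset.univ.filter (· ∉ A), (1 + (y - 1) / ((G.degree j : ℝ) + 1)) := by
  have hr : (∏ i ∈ Finset.univ.filter (· ∈ A), (1 + (x - 1) / ((G.degree i : ℝ) + 1))) *
      ∏ j ∈ Finset.univ.filter (· ∉ A), (1 + (y - 1) / ((G.degree j : ℝ) + 1)) =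
      ∏ v, pavg (ptg G (fun v => if v ∈ A then x else y) v) := by
    rw [← Finset.prod_filter_mul_prod_filter_not Finset.univ (fun v => v ∈ A)]
    congr 1
    · refine Finset.prod_congr rfl fun v hv => ?_
      simp only [Finset.mem_filter, Finset.mem_univ, true_and] at hv
      rw [pavg_ptg]; simp [hv]
    · refine Finset.prod_congr rfl fun v hv => ?_
      simp only [Finset.mem_filter, Finset.mem_univ, true_and] at hv
      rw [pavg_ptg]; simp [hv]
  rw [ge_iff_le, hr, permTutte_eq]
  rcases hxy with ⟨h0, h1, h2⟩ | ⟨h0, h1, h2⟩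
  · refine pavg_ineq G A hbip _ (fun v => ?_) (fun v hv => ?_) (fun v hv => ?_)
    · split_ifs <;> linarith
    · simpa [hv] using h1
    · simpa [hv] using h2
  · refine pavg_ineq G Aᶜ ?_ _ (fun v => ?_) (fun v hv => ?_) (fun v hv => ?_)
    · intro u v huv
      have := hbip u v huv
      simp only [Set.mem_compl_iff]
      tauto
    · split_ifs <;> linarith
    · have hv' : v ∉ A := hv
      simpa [hv'] using h1
    · have hv' : v ∈ A := by simpa using hv
      simpa [hv'] using h2
end

section
/- Let H = (A, B, E) be a finite bipartite graph with vertex degrees d_v, let x ≥ 2 and 0 ≤ s ≤ 1 be real numbers. Then T̃_H(x,0) · T̃_H(0,x) ≥ Π_{v ∈ V(H)} [ ( (d_v+x)s/(d_v+1) + x(1−s) ) · ( s − (s/(d_v+1)) · Π_{u ∈ N(v)} γ_{x,s}(d_u) ) ]. -/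
open scoped Classical

/-- `γ_{x,s}(d) = (d+x)s / ((d+x)s + (d+1)x(1−s))`. -/
noncomputable def gam (x s d : ℝ) : ℝ :=
  ((d + x) * s) / ((d + x) * s + (d + 1) * x * (1 - s))


namespace PT

open Finset

lemma sum_prod {ι L : Type*} [Fintype ι] [DecidableEq ι] [Fintype L] (w : ι → L → ℝ) :
    ∑ f : ι → L, ∏ v, w v (f v) = ∏ v, ∑ a, w v a :=
  (Fintype.prod_sum w).symm

lemma harris {ι κ L : Type*} [Fintype ι] [DecidableEq ι] [Fintype L] [LinearOrder L]
    (w : ι → L → ℝ) (hw : ∀ v a, 0 ≤ w v a) (hw1 : ∀ v, ∑ a, w v a = 1)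
    (φ : κ → (ι → L) → ℝ) (h0 : ∀ c f, 0 ≤ φ c f) (hm : ∀ c, Monotone (φ c)) (s : Finset κ) :
    ∏ c ∈ s, ∑ f, (∏ v, w v (f v)) * φ c f ≤ ∑ f, (∏ v, w v (f v)) * ∏ c ∈ s, φ c f := by
  have hW : ∀ f : ι → L, 0 ≤ ∏ v, w v (f v) := fun f => prod_nonneg fun v _ => hw v _
  have tot : ∑ f : ι → L, ∏ v, w v (f v) = 1 := by
    rw [sum_prod]; simp [hw1]
  induction s using Finset.induction_on with
  | empty => simp [tot]
  | insert c s hc ih =>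
    rw [prod_insert hc]
    have key := fkg (α := ι → L) (β := ℝ) (μ := fun f => ∏ v, w v (f v)) (f := φ c)
      (g := fun f => ∏ c ∈ s, φ c f) hW (h0 c) (fun f => prod_nonneg fun c _ => h0 c f) (hm c)
      (fun f g hfg => prod_le_prod (fun c _ => h0 c f) fun c _ => hm c hfg) (by
        intro a b
        apply le_of_eq
        rw [← prod_mul_distrib, ← prod_mul_distrib]
        apply prod_congr rfl
        intro v _
        rcases le_total (a v) (b v) with h | h
        · simp [h]
        · simp [h, mul_comm])
    rw [tot, one_mul] at key
    calc _ ≤ _ := mul_le_mul_of_nonneg_left ih (sum_nonneg fun f _ => mul_nonneg (hW f) (h0 c f))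
      _ ≤ _ := key
      _ = _ := by
        apply sum_congr rfl
        intro f _
        rw [prod_insert hc]

/-- mixed-monotone version -/
lemma harris_mixed {ι κ : Type*} {N : ℕ} [Fintype ι] [DecidableEq ι] (A : Set ι)
    (w : ι → Fin N → ℝ) (hw : ∀ v a, 0 ≤ w v a) (hw1 : ∀ v, ∑ a, w v a = 1)
    (φ : κ → (ι → Fin N) → ℝ) (h0 : ∀ c f, 0 ≤ φ c f)
    (hm : ∀ c f g, (∀ v ∈ A, f v ≤ g v) → (∀ v, v ∉ A → g v ≤ f v) → φ c f ≤ φ c g)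
    (s : Finset κ) :
    ∏ c ∈ s, ∑ f, (∏ v, w v (f v)) * φ c f ≤ ∑ f, (∏ v, w v (f v)) * ∏ c ∈ s, φ c f := by
  let e0 : ι → (Fin N ≃ Fin N) := fun v => if v ∈ A then Equiv.refl _ else Fin.revPerm
  let e : (ι → Fin N) ≃ (ι → Fin N) := Equiv.piCongrRight e0
  have key := harris (κ := κ) (fun v a => w v (e0 v a)) (fun v a => hw _ _)
    (fun v => by rw [Equiv.sum_comp (e0 v) (w v)]; exact hw1 v)
    (fun c f => φ c (e f)) (fun c f => h0 _ _) (by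
      intro c f g hfg
      apply hm
      · intro v hv; simpa [e, e0, hv] using hfg v
      · intro v hv; simpa [e, e0, hv] using hfg v) s
  have h1 : ∀ ψ : (ι → Fin N) → ℝ,
      ∑ f : ι → Fin N, (∏ v, w v (e0 v (f v))) * ψ (e f) = ∑ f, (∏ v, w v (f v)) * ψ f := by
    intro ψ
    exact Equiv.sum_comp e (fun f => (∏ v, w v (f v)) * ψ f)
  simp only [h1] at key
  rw [h1 (fun f => ∏ c ∈ s, φ c f)] at key
  exact key

lemma marg {ι L : Type*} [Fintype ι] [DecidableEq ι] [Fintype L] [DecidableEq L]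
    (w : ι → L → ℝ) (hw1 : ∀ v, ∑ a, w v a = 1) (S : Finset ι) (v : ι) (hv : v ∉ S)
    (R : L → L → Prop) [∀ a b, Decidable (R a b)]
    [∀ f : ι → L, Decidable (∀ u ∈ S, R (f u) (f v))] :
    ∑ f : ι → L, (∏ u, w u (f u)) * (if ∀ u ∈ S, R (f u) (f v) then 1 else 0) =
      ∑ a, w v a * ∏ u ∈ S, ∑ b, if R b a then w u b else 0 := by
  have h1 : ∀ f : ι → L, (∏ u, w u (f u)) * (if ∀ u ∈ S, R (f u) (f v) then (1:ℝ) else 0) =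
      ∑ a, ∏ u, (if u = v then (if f u = a then w u (f u) else 0) else if u ∈ S then
        (if R (f u) a then w u (f u) else 0) else w u (f u)) := by
    intro f
    rw [sum_eq_single (f v)]
    · split_ifs with h
      · rw [mul_one]
        apply prod_congr rfl
        intro u _
        by_cases huv : u = v
        · subst huv; simp
        · by_cases hu : u ∈ S
          · simp [huv, hu, h u hu]
          · simp [huv, hu]
      · push Not at h
        obtain ⟨u, hu, hR⟩ := h
        rw [mul_zero]
        symm
        apply prod_eq_zero (mem_univ u)
        have : u ≠ v := fun h => hv (h ▸ hu)
        simp [this, hu, hR]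
    · intro a _ ha
      apply prod_eq_zero (mem_univ v)
      simp [ha.symm]
    · simp
  simp only [h1]
  rw [sum_comm]
  apply sum_congr rfl
  intro a _
  rw [sum_prod (fun u b => if u = v then (if b = a then w u b else 0) else if u ∈ S then
        (if R b a then w u b else 0) else w u b)]
  rw [← mul_prod_erase univ _ (mem_univ v)]
  congr 1
  · simp
  · rw [← prod_subset (s₁ := S)]
    · apply prod_congr rfl
      intro u hu
      have : u ≠ v := fun h => hv (h ▸ hu)
      simp [this, hu]
    · intro u hu
      have : u ≠ v := fun h => hv (h ▸ hu)
      simp [this]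
    · intro u hu hus
      have : u ≠ v := by simpa using hu
      simp [this, hus, hw1]

lemma pow_sum_upper (d k : ℕ) : (∑ a ∈ range k, (a:ℝ) ^ d) * (d + 1) ≤ (k:ℝ) ^ (d+1) := by
  induction k with
  | zero => simp
  | succ k ih =>
    rw [sum_range_succ, add_mul]
    have : (k:ℝ)^(d+1) + (d+1) * (k:ℝ)^d ≤ ((k:ℝ)+1)^(d+1) := by
      have := Commute.add_pow (Commute.one_right (k:ℝ)) (d+1)
      rw [this, sum_range_succ, sum_range_succ]
      have : 0 ≤ ∑ m ∈ range d, (k:ℝ)^m * 1^(d+1-m) * ((d+1).choose m) :=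
        sum_nonneg fun _ _ => by positivity
      simp only [one_pow, mul_one, Nat.choose_self, Nat.cast_one, Nat.choose_succ_self_right] at *
      push_cast
      linarith
    push_cast
    linarith

lemma pow_sum_lower (d k : ℕ) : (k:ℝ) ^ (d+1) ≤ (∑ a ∈ range k, ((a:ℝ)+1) ^ d) * (d + 1) := by
  induction k with
  | zero => simp
  | succ k ih =>
    rw [sum_range_succ, add_mul]
    have hk : (0:ℝ) < (k:ℝ) + 1 := by positivity
    have : ((k:ℝ)+1)^(d+1) - (d+1) * ((k:ℝ)+1)^d ≤ (k:ℝ)^(d+1) := by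
      have h1 : (-1:ℝ) ≤ (k:ℝ)/(k+1) - 1 := by
        have : (0:ℝ) ≤ (k:ℝ)/(k+1) := by positivity
        linarith
      have h := one_add_mul_le_pow (a := (k:ℝ)/(k+1) - 1) (by linarith) (d+1)
      have e : (1 + ((k:ℝ)/(k+1) - 1)) = k/(k+1) := by ring
      rw [e, div_pow, le_div_iff₀ (by positivity)] at h
      refine le_trans (le_of_eq ?_) h
      push_cast
      field_simp
      ring
    push_cast
    linarith


lemma fin_sum (N k : ℕ) (h : k ≤ N) (g : ℕ → ℝ) :
    ∑ a : Fin N, (if (a:ℕ) < k then g a else 0) = ∑ a ∈ range k, g a := by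
  rw [Fin.sum_univ_eq_sum_range (fun a => if a < k then g a else 0) N, ← sum_filter]
  congr 1
  ext a; simp; omega

/-- weights -/
noncomputable def w0 (N k : ℕ) (b : Bool) (a : Fin N) : ℝ :=
  if b then (if (a:ℕ) < k then 0 else 1 / ((N:ℝ) - k)) else (if (a:ℕ) < k then 1 / (k:ℝ) else 0)

lemma w0_nonneg (N k : ℕ) (h : k ≤ N) (b a) : 0 ≤ w0 N k b a := by
  have : (k:ℝ) ≤ N := by exact_mod_cast h
  have : 0 ≤ (N:ℝ) - k := by linarith
  unfold w0; split_ifs <;> positivity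

lemma w0_sum (N k : ℕ) (h0 : 0 < k) (h : k < N) (b) : ∑ a, w0 N k b a = 1 := by
  have hk : (0:ℝ) < k := by exact_mod_cast h0
  have hN : (k:ℝ) < N := by exact_mod_cast h
  have hN' : (N:ℝ) - k ≠ 0 := by linarith
  unfold w0
  cases b
  · simp only [Bool.false_eq_true, if_false]
    rw [fin_sum N k h.le (fun _ => 1 / (k:ℝ))]
    simp; field_simp
  · simp only [if_true]
    have : ∀ a : Fin N, (if (a:ℕ) < k then (0:ℝ) else 1 / ((N:ℝ) - k)) =
      1 / ((N:ℝ) - k) - (if (a:ℕ) < k then 1 / ((N:ℝ) - k) else 0) := by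
      intro a; split_ifs <;> simp
    simp only [this, sum_sub_distrib]
    rw [fin_sum N k h.le (fun _ => 1 / ((N:ℝ) - k))]
    simp; field_simp

/-- The factors. -/
noncomputable def phi {V L : Type*} [LinearOrder L] (G : SimpleGraph V) (A : Set V) (x : ℝ)
    (v : V) (f : V → L) : ℝ :=
  if v ∈ A then (if ∀ u, G.Adj v u → f u ≤ f v then x else 1)
  else (if ∀ u, G.Adj v u → f u < f v then 0 else 1)

lemma phi_nonneg {V L : Type*} [LinearOrder L] (G : SimpleGraph V) (A : Set V) (x : ℝ)
    (hx : 1 ≤ x) (v : V) (f : V → L) : 0 ≤ phi G A x v f := by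
  unfold phi; split_ifs <;> linarith

lemma phi_le {V L : Type*} [LinearOrder L] (G : SimpleGraph V) (A : Set V) (x : ℝ)
    (hx : 1 ≤ x) (v : V) (f : V → L) : phi G A x v f ≤ x := by
  unfold phi; split_ifs <;> linarith

lemma phi_mono {V L : Type*} [LinearOrder L] (G : SimpleGraph V) (A : Set V)
    (hb : IsBipartition G A) (x : ℝ) (hx : 1 ≤ x) (v : V) (f g : V → L)
    (h1 : ∀ v ∈ A, f v ≤ g v) (h2 : ∀ v, v ∉ A → g v ≤ f v) :
    phi G A x v f ≤ phi G A x v g := by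
  unfold phi
  split_ifs with hv hf hg hg hf hg hg
  · rfl
  · exact absurd (fun u hu => (h2 u ((hb v u hu).1 hv)).trans ((hf u hu).trans (h1 v hv))) hg
  · exact hx
  · rfl
  · rfl
  · exact zero_le_one
  · refine absurd (fun u hu => ?_) hf
    have hu' : u ∈ A := by
      by_contra h
      exact hv ((hb v u hu).2 h)
    exact (h1 u hu').trans_lt ((hg u hu).trans_le (h2 v hv))
  · rfl

variable {V : Type*} [Fintype V] [DecidableEq V]

lemma act_le (G : SimpleGraph V) [DecidableRel G.Adj] (N k : ℕ) (h0 : 0 < k) (h : k < N)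
    (c : V → Bool) (v : V) (hv : c v = false) (hc : ∀ u ∈ G.neighborFinset v, c u = false) :
    (1:ℝ) / (G.degree v + 1) ≤
    ∑ f : V → Fin N, (∏ u, w0 N k (c u) (f u)) *
      (if ∀ u ∈ G.neighborFinset v, f u ≤ f v then 1 else 0) := by
  have hk : (0:ℝ) < k := by exact_mod_cast h0
  rw [marg (fun u => w0 N k (c u)) (fun u => w0_sum N k h0 h _) _ v (by simp) (fun a b => a ≤ b)]
  have h1 : ∀ a : Fin N, w0 N k (c v) a * ∏ u ∈ G.neighborFinset v,
      (∑ b, if b ≤ a then w0 N k (c u) b else 0) =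
      if (a:ℕ) < k then (fun n : ℕ => 1 / (k:ℝ) * (((n:ℝ)+1) / k) ^ (G.degree v)) a else 0 := by
    intro a
    by_cases ha : (a:ℕ) < k
    · have : ∀ u ∈ G.neighborFinset v, (∑ b, if b ≤ a then w0 N k (c u) b else 0) =
          ((a:ℝ)+1)/k := by
        intro u hu
        have : ∀ b : Fin N, (if b ≤ a then w0 N k (c u) b else 0) =
            if (b:ℕ) < a + 1 then (fun _ => 1/(k:ℝ)) (b:ℕ) else 0 := by
          intro b
          have e : b ≤ a ↔ (b:ℕ) < a + 1 := by rw [Fin.le_def]; omega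
          by_cases hba : (b:ℕ) < a + 1
          · have : (b:ℕ) < k := by omega
            simp [e, hba, w0, hc u hu, this]
          · simp [e, hba]
        simp only [this]
        rw [fin_sum N (a+1) (by omega) (fun _ => 1 / (k:ℝ))]
        simp; field_simp
      rw [prod_congr rfl this]
      simp [w0, hv, ha, div_pow]
    · simp [w0, hv, ha]
  rw [sum_congr rfl (fun a _ => h1 a),
    fin_sum N k h.le (fun n : ℕ => 1 / (k:ℝ) * (((n:ℝ)+1) / k) ^ (G.degree v))]
  have := pow_sum_lower (G.degree v) k
  rw [div_le_iff₀ (by positivity)]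
  simp only [div_pow, mul_div_assoc', ← mul_sum, ← sum_div]
  rw [div_mul_eq_mul_div, le_div_iff₀ (by positivity)]
  rw [one_div, mul_assoc, one_mul]
  rw [← div_eq_inv_mul, le_div_iff₀ hk, ← pow_succ]
  exact this

lemma act_lt (G : SimpleGraph V) [DecidableRel G.Adj] (N k : ℕ) (h0 : 0 < k) (h : k < N)
    (c : V → Bool) (v : V) (hv : c v = false) (hc : ∀ u ∈ G.neighborFinset v, c u = false) :
    ∑ f : V → Fin N, (∏ u, w0 N k (c u) (f u)) *
      (if ∀ u ∈ G.neighborFinset v, f u < f v then 1 else 0) ≤ (1:ℝ) / (G.degree v + 1) := by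
  have hk : (0:ℝ) < k := by exact_mod_cast h0
  rw [marg (fun u => w0 N k (c u)) (fun u => w0_sum N k h0 h _) _ v (by simp) (fun a b => a < b)]
  have h1 : ∀ a : Fin N, w0 N k (c v) a * ∏ u ∈ G.neighborFinset v,
      (∑ b, if b < a then w0 N k (c u) b else 0) =
      if (a:ℕ) < k then (fun n : ℕ => 1 / (k:ℝ) * ((n:ℝ) / k) ^ (G.degree v)) a else 0 := by
    intro a
    by_cases ha : (a:ℕ) < k
    · have : ∀ u ∈ G.neighborFinset v, (∑ b, if b < a then w0 N k (c u) b else 0) =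
          (a:ℝ)/k := by
        intro u hu
        have : ∀ b : Fin N, (if b < a then w0 N k (c u) b else 0) =
            if (b:ℕ) < a then (fun _ => 1/(k:ℝ)) (b:ℕ) else 0 := by
          intro b
          by_cases hba : (b:ℕ) < a
          · have : (b:ℕ) < k := by omega
            simp [Fin.lt_def, hba, w0, hc u hu, this]
          · simp [Fin.lt_def, hba]
        simp only [this]
        rw [fin_sum N a (by omega) (fun _ => 1 / (k:ℝ))]
        simp; field_simp
      rw [prod_congr rfl this]
      simp [w0, hv, ha, div_pow]
    · simp [w0, hv, ha]
  rw [sum_congr rfl (fun a _ => h1 a),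
    fin_sum N k h.le (fun n : ℕ => 1 / (k:ℝ) * ((n:ℝ) / k) ^ (G.degree v))]
  have := pow_sum_upper (G.degree v) k
  rw [le_div_iff₀ (by positivity)]
  simp only [div_pow, mul_div_assoc', ← mul_sum, ← sum_div]
  rw [div_mul_eq_mul_div, div_le_iff₀ (by positivity)]
  rw [one_div, mul_assoc, one_mul]
  rw [← div_eq_inv_mul, div_le_iff₀ hk, ← pow_succ]
  exact this

/-- lower bound for a factor given the classification `c` -/
noncomputable def bd (G : SimpleGraph V) [DecidableRel G.Adj] (A : Set V) (x : ℝ)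
    (c : V → Bool) (v : V) : ℝ :=
  if v ∈ A then (if c v then x else ((G.degree v:ℝ) + x) / (G.degree v + 1))
  else 1 - 1 / ((G.degree v:ℝ) + 1) * (if ∀ u ∈ G.neighborFinset v, c u = false then 1 else 0)

lemma bd_le (G : SimpleGraph V) [DecidableRel G.Adj] (A : Set V) (hb : IsBipartition G A) (x : ℝ)
    (hx : 1 ≤ x) (N k : ℕ) (h0 : 0 < k) (h : k < N)
    (c : V → Bool) (hc : ∀ v, v ∉ A → c v = false) (v : V) :
    bd G A x c v ≤ ∑ f : V → Fin N, (∏ u, w0 N k (c u) (f u)) * phi G A x v f := by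
  have tot : ∑ f : V → Fin N, ∏ u, w0 N k (c u) (f u) = 1 := by
    rw [sum_prod (fun u => w0 N k (c u))]; simp [w0_sum N k h0 h]
  -- constant on the support
  have supp : ∀ y : ℝ, (∀ f : V → Fin N, (∀ u, ((f u : ℕ) < k ↔ c u = false)) →
      phi G A x v f = y) →
      ∑ f : V → Fin N, (∏ u, w0 N k (c u) (f u)) * phi G A x v f = y := by
    intro y hy
    rw [← one_mul y, ← tot, sum_mul]
    apply sum_congr rfl
    intro f _
    by_cases hf : ∀ u, ((f u : ℕ) < k ↔ c u = false)
    · rw [hy f hf]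
    · push Not at hf
      obtain ⟨u, hu⟩ := hf
      have : ∏ u, w0 N k (c u) (f u) = 0 := by
        apply prod_eq_zero (mem_univ u)
        rcases hu with ⟨h1, h2⟩ | ⟨h1, h2⟩
        · simp at h2; simp [w0, h1, h2]
        · have : ¬ (f u : ℕ) < k := by omega
          simp [w0, this, h2]
      simp [this]
  unfold bd
  by_cases hv : v ∈ A
  · have hnb : ∀ u ∈ G.neighborFinset v, c u = false := by
      intro u hu
      exact hc u ((hb v u (by simpa using hu)).1 hv)
    by_cases hcv : c v = true
    · rw [supp x]
      · simp [hv, hcv]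
      · intro f hf
        have : ∀ u, G.Adj v u → f u ≤ f v := by
          intro u hu
          have h1 := (hf u).2 (hnb u (by simpa using hu))
          have h2 := hf v
          simp [hcv] at h2
          rw [Fin.le_def]; omega
        rw [phi, if_pos hv, if_pos this]
    · have hcv' : c v = false := by simpa using hcv
      have e : ∀ f : V → Fin N, (∏ u, w0 N k (c u) (f u)) * phi G A x v f =
          (∏ u, w0 N k (c u) (f u)) + (x - 1) * ((∏ u, w0 N k (c u) (f u)) *
           (if ∀ u ∈ G.neighborFinset v, f u ≤ f v then 1 else 0)) := by
        intro f
        simp only [phi, hv, if_true, SimpleGraph.mem_neighborFinset]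
        split_ifs <;> ring
      simp only [e, sum_add_distrib, tot, ← mul_sum]
      have := act_le G N k h0 h c v hcv' hnb
      have := mul_le_mul_of_nonneg_left this (sub_nonneg.2 hx)
      simp only [hv, hcv', if_true, Bool.false_eq_true, if_false]
      refine le_trans (le_of_eq ?_) (add_le_add_right this 1)
      field_simp
      ring
  · simp only [hv, if_false]
    split_ifs with hnb
    · have e : ∀ f : V → Fin N, (∏ u, w0 N k (c u) (f u)) * phi G A x v f =
          (∏ u, w0 N k (c u) (f u)) - ((∏ u, w0 N k (c u) (f u)) *
           (if ∀ u ∈ G.neighborFinset v, f u < f v then 1 else 0)) := by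
        intro f
        simp only [phi, hv, if_false, SimpleGraph.mem_neighborFinset]
        split_ifs <;> ring
      simp only [e, sum_sub_distrib, tot]
      have := act_lt G N k h0 h c v (hc v hv) hnb
      linarith
    · rw [supp 1]
      · simp
      · intro f hf
        have : ¬ ∀ u, G.Adj v u → f u < f v := by
          intro hlt
          apply hnb
          intro u hu
          have h1 := hlt u (by simpa using hu)
          rw [Fin.lt_def] at h1
          rw [← hf u]
          have := (hf v).2 (hc v hv)
          omega
        simp only [phi, hv, if_false, this]

/-- the target product -/
noncomputable def tgt (G : SimpleGraph V) [DecidableRel G.Adj] (A : Set V) (x s : ℝ) (v : V) : ℝ :=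
  if v ∈ A then ((G.degree v : ℝ) + x) * s / ((G.degree v : ℝ) + 1) + x * (1 - s)
  else s - s / ((G.degree v : ℝ) + 1) * ∏ u ∈ G.neighborFinset v, gam x s (G.degree u)

lemma bd_nonneg (G : SimpleGraph V) [DecidableRel G.Adj] (A : Set V) (x : ℝ) (hx : 1 ≤ x)
    (c : V → Bool) (v : V) : 0 ≤ bd G A x c v := by
  unfold bd
  have : 1 / ((G.degree v:ℝ) + 1) ≤ 1 := by
    rw [div_le_one (by positivity)]; simp
  split_ifs <;> first | positivity | linarith

lemma bd_mono (G : SimpleGraph V) [DecidableRel G.Adj] (A : Set V) (x : ℝ)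
    (v : V) (hv : v ∉ A) : Monotone (fun c => bd G A x c v) := by
  intro c c' hcc
  have h1 : 0 ≤ 1 / ((G.degree v:ℝ) + 1) := by positivity
  simp only [bd, hv, if_false]
  have : ((if ∀ u ∈ G.neighborFinset v, c' u = false then 1 else 0 : ℝ)) ≤
    (if ∀ u ∈ G.neighborFinset v, c u = false then 1 else 0) := by
    split_ifs with h h'
    · rfl
    · exact absurd (fun u hu => by have := hcc u; rw [h u hu] at this; exact le_bot_iff.1 this) h'
    · exact zero_le_one
    · rfl
  have := mul_le_mul_of_nonneg_left this h1
  linarith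

lemma gam_den (x s d : ℝ) (hx : 1 ≤ x) (hs0 : 0 ≤ s) (hs1 : s ≤ 1) (hd : 0 ≤ d) :
    0 < (d + x) * s + (d + 1) * x * (1 - s) := by
  rcases hs0.eq_or_lt with h | h
  · subst h; simp; positivity
  · have : 0 ≤ (d + 1) * x * (1 - s) := mul_nonneg (by positivity) (by linarith)
    have : 0 < (d + x) * s := by positivity
    linarith

lemma gam_nonneg (x s d : ℝ) (hx : 1 ≤ x) (hs0 : 0 ≤ s) (hs1 : s ≤ 1) (hd : 0 ≤ d) :
    0 ≤ gam x s d := div_nonneg (by positivity) (gam_den x s d hx hs0 hs1 hd).le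

lemma gam_le (x s d : ℝ) (hx : 1 ≤ x) (hs0 : 0 ≤ s) (hs1 : s ≤ 1) (hd : 0 ≤ d) :
    gam x s d ≤ 1 := by
  unfold gam
  rw [div_le_one (gam_den x s d hx hs0 hs1 hd)]
  have : 0 ≤ (d + 1) * x * (1 - s) := mul_nonneg (by positivity) (by linarith)
  linarith

/-- step 2 weights -/
noncomputable def rho (G : SimpleGraph V) [DecidableRel G.Adj] (A : Set V) (x s : ℝ) (v : V)
    (b : Bool) : ℝ :=
  if v ∈ A then (if b then 1 - gam x s (G.degree v) else gam x s (G.degree v))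
  else (if b then 0 else 1)

lemma step2 (G : SimpleGraph V) [DecidableRel G.Adj] (A : Set V) (hb : IsBipartition G A) (x s : ℝ)
    (hx : 1 ≤ x) (hs0 : 0 ≤ s) (hs1 : s ≤ 1) :
    ∏ v, tgt G A x s v ≤ ∑ c : V → Bool,
      if ∀ v, v ∉ A → c v = false then (∏ v, if c v then 1 - s else s) * ∏ v, bd G A x c v else 0 := by
  have hd : ∀ v, (0:ℝ) ≤ G.degree v := fun v => by positivity
  have hr0 : ∀ v b, 0 ≤ rho G A x s v b := by
    intro v b
    have h1 := gam_nonneg x s (G.degree v) hx hs0 hs1 (hd v)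
    have h2 := gam_le x s (G.degree v) hx hs0 hs1 (hd v)
    unfold rho; split_ifs <;> linarith
  have hr1 : ∀ v, ∑ b, rho G A x s v b = 1 := by
    intro v
    rw [Fintype.sum_bool]
    by_cases hv : v ∈ A <;> simp [rho, hv]
  let Z : V → ℝ := fun v =>
    if v ∈ A then ((G.degree v : ℝ) + x) * s / ((G.degree v : ℝ) + 1) + x * (1 - s) else s
  let h : V → (V → Bool) → ℝ := fun v c => if v ∈ A then 1 else bd G A x c v
  have hZ : ∀ v, 0 ≤ Z v := by
    intro v
    have : 0 ≤ x * (1 - s) := mul_nonneg (by linarith) (by linarith)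
    have : 0 ≤ ((G.degree v : ℝ) + x) * s / ((G.degree v : ℝ) + 1) := by positivity
    dsimp only [Z]; split_ifs <;> linarith
  have key := harris (rho G A x s) hr0 hr1 h
    (fun v c => by 
      by_cases hv : v ∈ A
      · simp [h, hv]
      · simpa [h, hv] using bd_nonneg G A x hx c v)
    (fun v => by
      by_cases hv : v ∈ A
      · simp only [h, hv, if_true]; exact monotone_const
      · simp only [h, hv, if_false]; exact bd_mono G A x v hv) univ
  have hE : ∀ v, Z v * ∑ c : V → Bool, (∏ u, rho G A x s u (c u)) * h v c = tgt G A x s v := by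
    intro v
    have tot : ∑ c : V → Bool, ∏ u, rho G A x s u (c u) = 1 := by
      rw [sum_prod, prod_congr rfl fun v _ => hr1 v, prod_const_one]
    by_cases hv : v ∈ A
    · simp [Z, h, tgt, hv, tot]
    · have e : ∀ c : V → Bool, (∏ u, rho G A x s u (c u)) * h v c =
        (∏ u, rho G A x s u (c u)) - 1 / ((G.degree v:ℝ) + 1) * ((∏ u, rho G A x s u (c u)) *
          (if ∀ u ∈ G.neighborFinset v, c u = false then 1 else 0)) := by
        intro c
        simp only [h, hv, if_false, bd]
        ring
      simp only [e, sum_sub_distrib, tot, ← mul_sum]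
      rw [marg (rho G A x s) hr1 (G.neighborFinset v) v (by simp) (fun b _ => b = false)]
      rw [← sum_mul, hr1, one_mul]
      have : ∀ u ∈ G.neighborFinset v, (∑ b, if b = false then rho G A x s u b else 0) =
          gam x s (G.degree u) := by
        intro u hu
        have huA : u ∈ A := by
          by_contra h'
          exact hv ((hb v u (by simpa using hu)).2 h')
        simp [rho, huA]
      rw [prod_congr rfl this]
      simp only [Z, tgt, hv, if_false]
      ring
  calc ∏ v, tgt G A x s v
      = (∏ v, Z v) * ∏ v, ∑ c : V → Bool, (∏ u, rho G A x s u (c u)) * h v c := by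
        rw [← prod_mul_distrib]
        exact prod_congr rfl fun v _ => (hE v).symm
    _ ≤ (∏ v, Z v) * ∑ c : V → Bool, (∏ u, rho G A x s u (c u)) * ∏ v, h v c :=
        mul_le_mul_of_nonneg_left key (prod_nonneg fun v _ => hZ v)
    _ = _ := by
        rw [mul_sum]
        apply sum_congr rfl
        intro c _
        split_ifs with hc
        · rw [← prod_mul_distrib, ← prod_mul_distrib, ← prod_mul_distrib]
          apply prod_congr rfl
          intro v _
          by_cases hv : v ∈ A
          · have hg := gam_den x s (G.degree v) hx hs0 hs1 (hd v)
            have hd1 : (G.degree v : ℝ) + 1 ≠ 0 := by have := hd v; positivity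
            generalize hde : (G.degree v : ℝ) = d at hg hd1
            have hZ' : (d + x) * s / (d + 1) + x * (1 - s) =
                ((d + x) * s + (d + 1) * x * (1 - s)) / (d + 1) := by field_simp
            cases hcv : c v
            · simp only [Z, rho, h, bd, hv, hcv, if_true, Bool.false_eq_true, if_false, gam]
              rw [hde, hZ']
              generalize hD : (d + x) * s + (d + 1) * x * (1 - s) = D at hg
              field_simp
            · simp only [Z, rho, h, bd, hv, hcv, if_true, gam]
              rw [hde, hZ']
              generalize hD : (d + x) * s + (d + 1) * x * (1 - s) = D at hg
              field_simp
              rw [← hD]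
              ring
          · simp [Z, rho, h, hv, hc v hv]
        · push Not at hc
          obtain ⟨v, hv, hcv⟩ := hc
          have : ∏ u, rho G A x s u (c u) = 0 := by
            apply prod_eq_zero (mem_univ v)
            simp at hcv
            simp [rho, hv, hcv]
          simp [this]

lemma discrete (G : SimpleGraph V) [DecidableRel G.Adj] (A : Set V) (hb : IsBipartition G A)
    (x : ℝ) (hx : 1 ≤ x) (N k : ℕ) (h0 : 0 < k) (h : k < N) :
    ∏ v, tgt G A x ((k:ℝ)/N) v ≤
      (∑ f : V → Fin N, ∏ v, phi G A x v f) / (N:ℝ) ^ (Fintype.card V) := by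
  have hk : (0:ℝ) < k := by exact_mod_cast h0
  have hN : (k:ℝ) < N := by exact_mod_cast h
  have hN0 : (0:ℝ) < N := hk.trans hN
  have hs0 : 0 ≤ (k:ℝ)/N := by positivity
  have hs1 : (k:ℝ)/N ≤ 1 := by rw [div_le_one hN0]; exact hN.le
  set s := (k:ℝ)/N with hs
  refine (step2 G A hb x s hx hs0 hs1).trans ?_
  have hq : ∀ b : Bool, 0 ≤ (if b then 1 - s else s) := by
    intro b; split_ifs <;> linarith
  have e1 : (∑ f : V → Fin N, ∏ v, phi G A x v f) / (N:ℝ) ^ (Fintype.card V) =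
      ∑ c : V → Bool, (∏ v, if c v then 1 - s else s) *
        ∑ f : V → Fin N, (∏ v, w0 N k (c v) (f v)) * ∏ v, phi G A x v f := by
    simp only [mul_sum]
    rw [sum_comm, sum_div]
    apply sum_congr rfl
    intro f _
    simp only [← mul_assoc]
    rw [← sum_mul]
    simp only [← prod_mul_distrib]
    rw [sum_prod (fun v b => (if b then 1 - s else s) * w0 N k b (f v))]
    have : ∀ v, ∑ b : Bool, (if b then 1 - s else s) * w0 N k b (f v) = 1 / (N:ℝ) := by
      intro v
      have : (N:ℝ) - k ≠ 0 := by linarith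
      rw [Fintype.sum_bool]
      simp only [w0, hs]
      by_cases hf : (f v : ℕ) < k
      · simp only [hf, if_true, Bool.false_eq_true, if_false]; field_simp; ring
      · simp only [hf, if_true, Bool.false_eq_true, if_false]; field_simp; ring
    simp only [this, prod_const, card_univ]
    rw [one_div, inv_pow]; field_simp
  rw [e1]
  apply sum_le_sum
  intro c _
  have hqc : 0 ≤ ∏ v, (if c v then 1 - s else s) := prod_nonneg fun v _ => hq _
  split_ifs with hc
  · apply mul_le_mul_of_nonneg_left _ hqc
    refine le_trans ?_ (harris_mixed A (fun v => w0 N k (c v)) (fun v a => w0_nonneg N k h.le _ _)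
      (fun v => w0_sum N k h0 h _) (phi G A x) (fun v f => phi_nonneg G A x hx v f)
      (fun v f g h1 h2 => phi_mono G A hb x hx v f g h1 h2) univ)
    exact prod_le_prod (fun v _ => bd_nonneg G A x hx c v)
      fun v _ => bd_le G A hb x hx N k h0 h c hc v
  · apply mul_nonneg hqc
    exact sum_nonneg fun f _ => mul_nonneg (prod_nonneg fun v _ => w0_nonneg N k h.le _ _)
      (prod_nonneg fun v _ => phi_nonneg G A x hx v f)

lemma permTutte_eq (G : SimpleGraph V) (A : Set V) (x : ℝ) :
    permTutte G A x 0 = ((Fintype.card V).factorial : ℝ)⁻¹ *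
      ∑ π : V ≃ Fin (Fintype.card V), ∏ v, phi G A x v π := by
  unfold permTutte
  congr 1
  apply sum_congr rfl
  intro π _
  have hc : ∀ (y : ℝ) (p : V → Prop), y ^ Nat.card {v : V // p v} = ∏ v, if p v then y else 1 := by
    intro y p
    rw [Nat.card_eq_fintype_card, Fintype.card_subtype, prod_ite]
    simp
  rw [hc, hc, ← prod_mul_distrib]
  apply prod_congr rfl
  intro v _
  have hle : (∀ u, G.Adj v u → π u ≤ π v) ↔ (∀ u, G.Adj v u → π u < π v) := by
    refine forall_congr' fun u => imp_congr_right fun hu => ?_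
    have : π u ≠ π v := fun h => hu.ne (π.injective h).symm
    exact ⟨fun h => lt_of_le_of_ne h this, le_of_lt⟩
  unfold phi
  by_cases hv : v ∈ A
  · by_cases h : ∀ u, G.Adj v u → π u < π v
    · rw [if_pos ⟨hv, h⟩, if_neg (fun h => h.1 hv), if_pos hv, if_pos (hle.2 h), mul_one]
    · rw [if_neg (fun h' => h h'.2), if_neg (fun h => h.1 hv), if_pos hv,
        if_neg (fun h' => h (hle.1 h')), mul_one]
  · by_cases h : ∀ u, G.Adj v u → π u < π v
    · rw [if_neg (fun h => hv h.1), if_pos ⟨hv, h⟩, if_neg hv, if_pos h, one_mul]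
    · rw [if_neg (fun h => hv h.1), if_neg (fun h' => h h'.2), if_neg hv, if_neg h, one_mul]

lemma permTutte_swap (G : SimpleGraph V) (A : Set V) (x : ℝ) :
    permTutte G A 0 x = permTutte G Aᶜ x 0 := by
  unfold permTutte
  simp only [Set.mem_compl_iff, not_not, mul_comm]

lemma phi_congr {L L' : Type*} [LinearOrder L] [LinearOrder L'] (G : SimpleGraph V) (A : Set V)
    (x : ℝ) (f : V → L) (g : V → L') (h : ∀ u v, f u ≤ f v ↔ g u ≤ g v) (v : V) :
    phi G A x v f = phi G A x v g := by
  have h' : ∀ u v, f u < f v ↔ g u < g v := by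
    intro u v
    rw [← not_le, ← not_le, h]
  have a1 : (∀ u, G.Adj v u → f u ≤ f v) = (∀ u, G.Adj v u → g u ≤ g v) := by simp only [h]
  have a2 : (∀ u, G.Adj v u → f u < f v) = (∀ u, G.Adj v u → g u < g v) := by simp only [h']
  unfold phi
  congr 1
  · congr 1
  · congr 1

lemma exists_rank {N : ℕ} (f : V → Fin N) (hf : Function.Injective f) :
    ∃ π : V ≃ Fin (Fintype.card V), ∀ u v, f u ≤ f v ↔ π u ≤ π v := by
  let s := univ.image f
  have hs : s.card = Fintype.card V := by
    rw [card_image_of_injective _ hf, card_univ]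
  let e : V ≃ s := Equiv.ofBijective (fun v => ⟨f v, mem_image_of_mem f (mem_univ v)⟩)
    ⟨fun a b h => hf (by simpa using h), by
      rintro ⟨y, hy⟩
      obtain ⟨v, _, rfl⟩ := mem_image.1 hy
      exact ⟨v, rfl⟩⟩
  let o := s.orderIsoOfFin hs
  refine ⟨e.trans o.symm.toEquiv, fun u v => ?_⟩
  have : e u ≤ e v ↔ f u ≤ f v := Iff.rfl
  rw [← this]
  exact (o.symm.le_iff_le).symm

lemma inj_sum (G : SimpleGraph V) (A : Set V) (x : ℝ) (N : ℕ) :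
    ∑ f : V → Fin N with Function.Injective f, ∏ v, phi G A x v f =
      (N.descFactorial (Fintype.card V)) * permTutte G A x 0 := by
  rw [permTutte_eq]
  set P := ∑ π : V ≃ Fin (Fintype.card V), ∏ v, phi G A x v π with hP
  have hcard : (#{f : V → Fin N | Function.Injective f}) = N.descFactorial (Fintype.card V) := by
    rw [← Fintype.card_subtype, Fintype.card_congr (Equiv.subtypeInjectiveEquivEmbedding V (Fin N)),
      Fintype.card_embedding_eq, Fintype.card_fin]
  have h1 : ∀ σ : Equiv.Perm V, ∑ f : V → Fin N with Function.Injective f, ∏ v, phi G A x v f =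
      ∑ f : V → Fin N with Function.Injective f, ∏ v, phi G A x v (f ∘ σ) := by
    intro σ
    symm
    apply sum_equiv (Equiv.arrowCongr σ.symm (Equiv.refl (Fin N)))
    · intro f
      simp only [mem_filter, mem_univ, true_and]
      exact (Equiv.injective_comp σ f).symm
    · intro f _
      rfl
  have h2 : ∀ f : V → Fin N, Function.Injective f →
      ∑ σ : Equiv.Perm V, ∏ v, phi G A x v (f ∘ σ) = P := by
    intro f hf
    obtain ⟨π, hπ⟩ := exists_rank f hf
    rw [hP]
    apply Fintype.sum_equiv (Equiv.equivCongr (Equiv.refl V) π)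
    intro σ
    apply prod_congr rfl
    intro v _
    apply phi_congr
    intro a b
    exact hπ _ _
  have h3 : ((Fintype.card V).factorial : ℝ) *
      ∑ f : V → Fin N with Function.Injective f, ∏ v, phi G A x v f =
      (N.descFactorial (Fintype.card V)) * P := by
    rw [← Fintype.card_perm, ← card_univ, ← nsmul_eq_mul, ← sum_const,
      sum_congr rfl (fun σ _ => h1 σ), sum_comm,
      sum_congr rfl (fun f hf => h2 f (mem_filter.1 hf).2), sum_const, nsmul_eq_mul, hcard]
  have : ((Fintype.card V).factorial : ℝ) ≠ 0 := by positivity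
  field_simp
  linarith

lemma upper (G : SimpleGraph V) (A : Set V) (x : ℝ) (hx : 1 ≤ x) (N : ℕ) :
    ∑ f : V → Fin N, ∏ v, phi G A x v f ≤
      (N.descFactorial (Fintype.card V)) * permTutte G A x 0 +
      ((N:ℝ) ^ Fintype.card V - N.descFactorial (Fintype.card V)) * x ^ Fintype.card V := by
  rw [← sum_filter_add_sum_filter_not univ (fun f : V → Fin N => Function.Injective f),
    inj_sum]
  have hcard : (#{f : V → Fin N | Function.Injective f}) = N.descFactorial (Fintype.card V) := by
    rw [← Fintype.card_subtype, Fintype.card_congr (Equiv.subtypeInjectiveEquivEmbedding V (Fin N)),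
      Fintype.card_embedding_eq, Fintype.card_fin]
  have hc2 : (#{f : V → Fin N | ¬ Function.Injective f} : ℝ) =
      (N:ℝ) ^ Fintype.card V - N.descFactorial (Fintype.card V) := by
    rw [← hcard, eq_sub_iff_add_eq', ← Nat.cast_add, card_filter_add_card_filter_not]
    simp
  rw [← hc2]
  gcongr
  rw [← nsmul_eq_mul]
  apply sum_le_card_nsmul
  intro f _
  calc ∏ v, phi G A x v f ≤ ∏ v : V, x :=
        prod_le_prod (fun v _ => phi_nonneg G A x hx v f) (fun v _ => phi_le G A x hx v f)
    _ = _ := by simp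

lemma half (G : SimpleGraph V) [DecidableRel G.Adj] (A : Set V) (hb : IsBipartition G A)
    (x s : ℝ) (hx : 1 ≤ x) (hs0 : 0 ≤ s) (hs1 : s ≤ 1) :
    ∏ v, tgt G A x s v ≤ permTutte G A x 0 := by
  open Filter Topology in
  set m := Fintype.card V with hm
  have hbound : ∀ n : ℕ, ∏ v, tgt G A x (((⌊s * (n:ℝ)⌋₊ + 1 : ℕ) : ℝ) / ((n + 2 : ℕ) : ℝ)) v ≤
      (((n+2).descFactorial m : ℝ) / ((n + 2 : ℕ) : ℝ) ^ m) * permTutte G A x 0 +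
      (1 - ((n+2).descFactorial m : ℝ) / ((n + 2 : ℕ) : ℝ) ^ m) * x ^ m := by
    intro n
    have hfl : ⌊s * (n:ℝ)⌋₊ ≤ n := by
      apply Nat.floor_le_of_le
      have : (0:ℝ) ≤ n := by positivity
      nlinarith
    refine (discrete G A hb x hx (n+2) (⌊s * (n:ℝ)⌋₊ + 1) (by omega) (by omega)).trans ?_
    have hN : (0:ℝ) < ((n+2 : ℕ) : ℝ) ^ m := by positivity
    rw [div_le_iff₀ hN]
    refine (upper G A x hx (n+2)).trans (le_of_eq ?_)
    rw [← hm]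
    field_simp
  have hdesc : Tendsto (fun n : ℕ => ((n+2).descFactorial m : ℝ) / ((n + 2 : ℕ) : ℝ) ^ m)
      atTop (𝓝 1) := by
    have h := (isEquivalent_descFactorial m)
    have h' := (Asymptotics.isEquivalent_iff_tendsto_one (by
      filter_upwards [eventually_gt_atTop 0] with n hn
      have : (n:ℝ) ≠ 0 := by positivity
      simp [this])).1 h
    have := h'.comp (tendsto_add_atTop_nat 2)
    exact this
  have hR : Tendsto (fun n : ℕ => (((n+2).descFactorial m : ℝ) / ((n + 2 : ℕ) : ℝ) ^ m) *
      permTutte G A x 0 +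
      (1 - ((n+2).descFactorial m : ℝ) / ((n + 2 : ℕ) : ℝ) ^ m) * x ^ m) atTop
      (𝓝 (permTutte G A x 0)) := by
    have := (hdesc.mul_const (permTutte G A x 0)).add ((hdesc.const_sub 1).mul_const (x ^ m))
    simpa using this
  have hfl : Tendsto (fun n : ℕ => ((⌊s * (n:ℝ)⌋₊ + 1 : ℕ) : ℝ) / ((n + 2 : ℕ) : ℝ))
      atTop (𝓝 s) := by
    have h1 := (tendsto_nat_floor_mul_div_atTop hs0).comp (tendsto_natCast_atTop_atTop (R := ℝ))
    have h2 : Tendsto (fun n : ℕ => (1:ℝ) / n) atTop (𝓝 0) := tendsto_one_div_atTop_nhds_zero_nat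
    have h3 := (h1.add h2).div ((h2.const_mul 2).const_add 1) (by norm_num)
    simp only [add_zero, mul_zero, div_one] at h3
    refine h3.congr' ?_
    filter_upwards [eventually_gt_atTop 0] with n hn
    have : (n:ℝ) ≠ 0 := by positivity
    simp only [Function.comp, Pi.div_apply]
    push_cast
    field_simp
  have hgam : ∀ v, ContinuousAt (fun t => gam x t (G.degree v)) s := by
    intro v
    unfold gam
    have := gam_den x s (G.degree v) hx hs0 hs1 (by positivity)
    apply ContinuousAt.div
    · fun_prop
    · fun_prop
    · exact this.ne'
  have hcont : ContinuousAt (fun t => ∏ v, tgt G A x t v) s := by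
    apply tendsto_finsetProd
    intro v _
    unfold tgt
    by_cases hv : v ∈ A
    · simp only [hv, if_true]
      have : ContinuousAt (fun t : ℝ => ((G.degree v : ℝ) + x) * t / ((G.degree v : ℝ) + 1) +
        x * (1 - t)) s := by fun_prop
      exact this
    · simp only [hv, if_false]
      have : ContinuousAt (fun t => ∏ u ∈ G.neighborFinset v, gam x t (G.degree u)) s :=
        tendsto_finsetProd _ fun u _ => hgam u
      have : ContinuousAt (fun t => t - t / ((G.degree v : ℝ) + 1) *
        ∏ u ∈ G.neighborFinset v, gam x t (G.degree u)) s := by fun_prop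
      exact this
  have hL := Tendsto.comp hcont hfl
  exact le_of_tendsto_of_tendsto' hL hR hbound

lemma tgt_nonneg (G : SimpleGraph V) [DecidableRel G.Adj] (A : Set V)
    (x s : ℝ) (hx : 1 ≤ x) (hs0 : 0 ≤ s) (hs1 : s ≤ 1) (v : V) : 0 ≤ tgt G A x s v := by
  unfold tgt
  split_ifs
  · have : 0 ≤ x * (1 - s) := mul_nonneg (by linarith) (by linarith)
    positivity
  · have h1 : ∏ u ∈ G.neighborFinset v, gam x s (G.degree u) ≤ 1 :=
      prod_le_one (fun u _ => gam_nonneg x s _ hx hs0 hs1 (by positivity))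
        (fun u _ => gam_le x s _ hx hs0 hs1 (by positivity))
    have h2 : s / ((G.degree v : ℝ) + 1) ≤ s := div_le_self hs0 (by simp)
    have h3 : 0 ≤ s / ((G.degree v : ℝ) + 1) := by positivity
    nlinarith [mul_le_mul_of_nonneg_left h1 h3]

end PT

/-- For `x ≥ 2` and `0 ≤ s ≤ 1`,
`T̃_H(x,0)·T̃_H(0,x) ≥ Π_{v∈V} [((d_v+x)s/(d_v+1) + x(1−s)) · (s − s/(d_v+1) Π_{u∈N(v)} γ_{x,s}(d_u))]`. -/
theorem permTutte_mul_ge_prod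
    {V : Type*} [Fintype V] [DecidableEq V] (G : SimpleGraph V) [DecidableRel G.Adj]
    (A : Set V) (hbip : IsBipartition G A) (x s : ℝ)
    (hx : 2 ≤ x) (hs0 : 0 ≤ s) (hs1 : s ≤ 1) :
    permTutte G A x 0 * permTutte G A 0 x ≥
      ∏ v : V,
        ((((G.degree v : ℝ) + x) * s / ((G.degree v : ℝ) + 1) + x * (1 - s)) *
          (s - s / ((G.degree v : ℝ) + 1) *
            ∏ u ∈ G.neighborFinset v, gam x s (G.degree u))) := by
  have hx1 : 1 ≤ x := by linarith
  have hb' : IsBipartition G Aᶜ := by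
    intro u v huv
    have := hbip u v huv
    simp only [Set.mem_compl_iff]
    tauto
  have h1 := PT.half G A hbip x s hx1 hs0 hs1
  have h2 := PT.half G Aᶜ hb' x s hx1 hs0 hs1
  rw [← PT.permTutte_swap] at h2
  have h0 : 0 ≤ ∏ v, PT.tgt G A x s v :=
    Finset.prod_nonneg fun v _ => PT.tgt_nonneg G A x s hx1 hs0 hs1 v
  have h0' : 0 ≤ ∏ v, PT.tgt G Aᶜ x s v :=
    Finset.prod_nonneg fun v _ => PT.tgt_nonneg G Aᶜ x s hx1 hs0 hs1 v
  refine le_trans (le_of_eq ?_) (mul_le_mul h1 h2 h0' (h0.trans h1))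
  rw [← Finset.prod_mul_distrib]
  apply Finset.prod_congr rfl
  intro v _
  by_cases hv : v ∈ A
  · simp [PT.tgt, hv]
  · simp only [PT.tgt, hv, Set.mem_compl_iff, not_false_eq_true, if_true, if_false]
    ring
end
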